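/- Let G be a cactus with k cycles and m edges that contains a cut edge which is not a pendant edge, where all relevant quantities are as in the standard setup. Then Sz*_e(G) ≥ f(4,…,4) + m − 2 (f evaluated at k quadrangles), with equality if and only if G ≅ G*_1, the graph obtained from the bundle C_1(n−1,k) of k quadrangles by attaching a pendant edge at one of its pendant vertices. -/

import Mathlib

open scoped Classical
open Finset

noncomputable def eDist {V : Type*} (G : SimpleGraph V) (f : Sym2 V) (w : V) : ℕ :=
  Sym2.lift ⟨fun a b => min (G.dist a w) (G.dist b w), fun _ _ => min_comm _ _⟩ f

noncomputable def mCloser {V : Type*} (G : SimpleGraph V) [Fintype V] (u v : V) : ℕ :=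
  (G.edgeFinset.filter fun f => eDist G f u < eDist G f v).card

noncomputable def mEqui {V : Type*} (G : SimpleGraph V) [Fintype V] (u v : V) : ℕ :=
  (G.edgeFinset.filter fun f => eDist G f u = eDist G f v).card

/-- The edge revised Szeged index (each edge `uv` is counted once; the double sum over
ordered adjacent pairs counts it twice, whence the division by 2). -/
noncomputable def szRevE {V : Type*} (G : SimpleGraph V) [Fintype V] : ℚ :=
  (∑ u : V, ∑ v : V, if G.Adj u v then
      ((mCloser G u v : ℚ) + (mEqui G u v : ℚ) / 2) *
        ((mCloser G v u : ℚ) + (mEqui G u v : ℚ) / 2)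
    else 0) / 2

/-- The edges of `G` lying in the connected component `c`. -/
noncomputable def compEdges {V : Type*} (G : SimpleGraph V) [Fintype V]
    (c : G.ConnectedComponent) : Finset (Sym2 V) :=
  G.edgeFinset.filter fun f => ∀ x ∈ f, G.connectedComponentMk x = c

/-- A cactus: a connected graph in which any two (edge-)distinct cycles share
at most one vertex. -/
def IsCactus {V : Type*} (G : SimpleGraph V) : Prop :=
  G.Connected ∧ ∀ ⦃a b : V⦄ (p : G.Walk a a) (q : G.Walk b b),
    p.IsCycle → q.IsCycle → p.edges.toFinset ≠ q.edges.toFinset →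
    (p.support.toFinset ∩ q.support.toFinset).card ≤ 1

/-- The bundle `G(len 0, …, len (k-1))`: `k` cycles of the given lengths all sharing a single
common hub vertex, together with `p` pendant edges attached at the hub. -/
def bundleGraph (k : ℕ) (len : Fin k → ℕ) (p : ℕ) :
    SimpleGraph (Unit ⊕ ((Σ i : Fin k, Fin (len i - 1)) ⊕ Fin p)) :=
  SimpleGraph.fromRel fun x y =>
    match x, y with
    | Sum.inl _, Sum.inr (Sum.inr _) => True
    | Sum.inl _, Sum.inr (Sum.inl ⟨i, a⟩) => a.val = 0 ∨ a.val = len i - 2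
    | Sum.inr (Sum.inl ⟨i, a⟩), Sum.inr (Sum.inl ⟨j, b⟩) => i = j ∧ a.val + 1 = b.val
    | _, _ => False

/-- `G*₁`: the bundle of `k` quadrangles on a hub, `n - 3k - 3` pendant edges at the hub,
and a pendant path of length 2 at the hub (i.e. `C₁(n-1,k)` with a pendant edge attached
to one of its pendant vertices). -/
def GStar1 (n k : ℕ) :
    SimpleGraph (Unit ⊕ ((Σ _ : Fin k, Fin 3) ⊕ (Fin (n - 3 * k - 3) ⊕ Fin 2))) :=
  SimpleGraph.fromRel fun x y =>
    match x, y with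
    | Sum.inl _, Sum.inr (Sum.inr (Sum.inl _)) => True
    | Sum.inl _, Sum.inr (Sum.inr (Sum.inr b)) => b.val = 0
    | Sum.inr (Sum.inr (Sum.inr a)), Sum.inr (Sum.inr (Sum.inr b)) => a.val = 0 ∧ b.val = 1
    | Sum.inl _, Sum.inr (Sum.inl ⟨_, a⟩) => a.val = 0 ∨ a.val = 2
    | Sum.inr (Sum.inl ⟨i, a⟩), Sum.inr (Sum.inl ⟨j, b⟩) => i = j ∧ a.val + 1 = b.val
    | _, _ => False

section partA
variable {V : Type*} [Fintype V] (G : SimpleGraph V)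

/-- total edge distance of a vertex -/
noncomputable def totD (w : V) : ℤ := ∑ f ∈ G.edgeFinset, (eDist G f w : ℤ)

@[simp] lemma eDist_mk (a b w : V) : eDist G s(a, b) w = min (G.dist a w) (G.dist b w) := rfl

lemma dist_lip (hc : G.Connected) {u v : V} (h : G.Adj u v) (a : V) :
    G.dist a u ≤ G.dist a v + 1 := by
  have := hc.dist_triangle (u := a) (v := v) (w := u)
  rw [SimpleGraph.dist_eq_one_iff_adj.2 h.symm] at this
  exact this

lemma eDist_lip (hc : G.Connected) {u v : V} (h : G.Adj u v) (f : Sym2 V) :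
    eDist G f u ≤ eDist G f v + 1 := by
  induction f with
  | _ a b =>
    simp only [eDist_mk]
    have h1 := dist_lip G hc h a
    have h2 := dist_lip G hc h b
    omega

lemma eDist_eq_zero (hc : G.Connected) (a b w : V) :
    eDist G s(a, b) w = 0 ↔ w = a ∨ w = b := by
  simp only [eDist_mk]
  have h1 := hc.dist_eq_zero_iff (u := a) (v := w)
  have h2 := hc.dist_eq_zero_iff (u := b) (v := w)
  rw [Nat.min_eq_zero_iff, h1, h2, eq_comm, @eq_comm _ b]

lemma eDist_zero_iff (hc : G.Connected) (f : Sym2 V) (w : V) :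
    eDist G f w = 0 ↔ w ∈ f := by
  induction f with
  | _ a b => rw [eDist_eq_zero G hc, Sym2.mem_iff]

lemma mCloser_sub (hc : G.Connected) {u v : V} (h : G.Adj u v) :
    (mCloser G u v : ℤ) - mCloser G v u = totD G v - totD G u := by
  unfold mCloser totD
  rw [Finset.card_filter, Finset.card_filter]
  push_cast
  rw [← Finset.sum_sub_distrib, ← Finset.sum_sub_distrib]
  refine Finset.sum_congr rfl fun f _ => ?_
  have h1 := eDist_lip G hc h f
  have h2 := eDist_lip G hc h.symm f
  split_ifs <;> omega

lemma mCloser_add (u v : V) :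
    mCloser G u v + mCloser G v u + mEqui G u v = G.edgeFinset.card := by
  unfold mCloser mEqui
  rw [Finset.card_filter, Finset.card_filter, Finset.card_filter, ← Finset.sum_add_distrib,
    ← Finset.sum_add_distrib, Finset.card_eq_sum_ones]
  refine Finset.sum_congr rfl fun f _ => ?_
  split_ifs <;> omega

/-- weight of an edge -/
noncomputable def gw (m : ℕ) (e : Sym2 V) : ℚ :=
  Sym2.lift ⟨fun u v => ((m : ℚ) ^ 2 - ((totD G u - totD G v : ℤ) : ℚ) ^ 2) / 4,
    fun u v => by push_cast; ring⟩ e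

lemma gw_mk (m : ℕ) (u v : V) :
    gw G m s(u, v) = ((m : ℚ) ^ 2 - ((totD G u - totD G v : ℤ) : ℚ) ^ 2) / 4 := rfl

lemma term_eq (hc : G.Connected) {u v : V} (h : G.Adj u v) :
    ((mCloser G u v : ℚ) + (mEqui G u v : ℚ) / 2) *
        ((mCloser G v u : ℚ) + (mEqui G u v : ℚ) / 2) = gw G G.edgeFinset.card s(u, v) := by
  have h1 := mCloser_sub G hc h
  have h2 := mCloser_add G u v
  rw [gw_mk, ← h2]
  have : (totD G u - totD G v : ℤ) = (mCloser G v u : ℤ) - mCloser G u v := by linarith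
  rw [this]
  push_cast
  ring

lemma szRevE_eq_sum (hc : G.Connected) :
    szRevE G = (∑ u : V, ∑ v : V, if G.Adj u v then gw G G.edgeFinset.card s(u, v) else 0) / 2 := by
  unfold szRevE
  congr 1
  refine Finset.sum_congr rfl fun u _ => Finset.sum_congr rfl fun v _ => ?_
  split_ifs with h
  · exact term_eq G hc h
  · rfl

lemma sum_adj_eq (g : Sym2 V → ℚ) :
    (∑ u : V, ∑ v : V, if G.Adj u v then g s(u, v) else 0) = 2 * ∑ e ∈ G.edgeFinset, g e := by
  rw [← Finset.sum_product', ← Finset.sum_filter, Finset.mul_sum]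
  rw [← Finset.sum_fiberwise_of_maps_to (s := Finset.filter (fun x : V × V => G.Adj x.1 x.2) (univ ×ˢ univ))
    (t := G.edgeFinset) (g := fun x : V × V => s(x.1, x.2))]
  · refine Finset.sum_congr rfl fun e he => ?_
    induction e with
    | _ a b =>
      have hab : G.Adj a b := by simpa using he
      have : (Finset.filter (fun x : V × V => s(x.1, x.2) = s(a, b))
          (Finset.filter (fun x : V × V => G.Adj x.1 x.2) (univ ×ˢ univ))) = {(a, b), (b, a)} := by
        ext ⟨p, q⟩
        simp only [Finset.mem_filter, Finset.mem_product, Finset.mem_univ, true_and,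
          Finset.mem_insert, Finset.mem_singleton, Prod.mk.injEq, Sym2.eq_iff]
        constructor
        · exact fun h => h.2
        · rintro (⟨rfl, rfl⟩ | ⟨rfl, rfl⟩)
          · exact ⟨hab, by simp⟩
          · exact ⟨hab.symm, by simp⟩
      rw [this, Finset.sum_pair]
      · rw [Sym2.eq_swap (a := b)]; ring
      · intro h
        exact hab.ne (Prod.mk.inj h).1
  · intro x hx
    simpa using hx

lemma szRevE_eq (hc : G.Connected) :
    szRevE G = ∑ e ∈ G.edgeFinset, gw G G.edgeFinset.card e := by
  rw [szRevE_eq_sum G hc, sum_adj_eq]; ring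

end partA

section partB
variable {V : Type*} [Fintype V] (G : SimpleGraph V)

/-- `C` is the edge set of a cycle of `G`. -/
def IsCyc (C : Finset (Sym2 V)) : Prop :=
  ∃ (a : V) (p : G.Walk a a), p.IsCycle ∧ p.edges.toFinset = C

/-- all cycles of `G` -/
noncomputable def cycs : Finset (Finset (Sym2 V)) := Finset.univ.filter (IsCyc G)

variable {G}

lemma cyc_eq (hG : IsCactus G) {C D : Finset (Sym2 V)} (hC : IsCyc G C) (hD : IsCyc G D)
    {e : Sym2 V} (h1 : e ∈ C) (h2 : e ∈ D) : C = D := by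
  obtain ⟨a, p, hp, rfl⟩ := hC
  obtain ⟨b, q, hq, rfl⟩ := hD
  by_contra hne
  have := hG.2 p q hp hq hne
  induction e with
  | _ u v =>
    rw [List.mem_toFinset] at h1 h2
    have huv : G.Adj u v := p.adj_of_mem_edges h1
    have : ({u, v} : Finset V).card ≤ 1 := by
      refine le_trans (Finset.card_le_card ?_) this
      intro w hw
      rw [Finset.mem_insert, Finset.mem_singleton] at hw
      rw [Finset.mem_inter, List.mem_toFinset, List.mem_toFinset]
      rcases hw with rfl | rfl
      · exact ⟨p.fst_mem_support_of_mem_edges h1, q.fst_mem_support_of_mem_edges h2⟩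
      · exact ⟨p.snd_mem_support_of_mem_edges h1, q.snd_mem_support_of_mem_edges h2⟩
    rw [Finset.card_pair huv.ne] at this
    omega

lemma cyc_sub {C : Finset (Sym2 V)} (hC : IsCyc G C) : C ⊆ G.edgeFinset := by
  obtain ⟨a, p, hp, rfl⟩ := hC
  intro e he
  rw [List.mem_toFinset] at he
  simpa using p.edges_subset_edgeSet he

lemma cyc_nonempty {C : Finset (Sym2 V)} (hC : IsCyc G C) : C.Nonempty := by
  obtain ⟨a, p, hp, rfl⟩ := hC
  have := hp.three_le_length
  rw [List.toFinset_nonempty_iff]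
  intro h
  have := p.length_edges
  rw [h] at this
  simp at this
  omega

lemma cyc_disj (hG : IsCactus G) :
    Set.PairwiseDisjoint (cycs G : Set (Finset (Sym2 V))) id := by
  intro C hC D hD hne
  rw [Function.onFun, Finset.disjoint_left]
  intro e h1 h2
  simp only [cycs, coe_filter, mem_univ, true_and, Set.mem_ofPred_eq] at hC hD
  exact hne (cyc_eq hG hC hD h1 h2)

lemma edges_le (hG : IsCactus G) :
    G.edgeFinset.card + 1 ≤ Fintype.card V + (cycs G).card := by
  have hch : ∀ C : Finset (Sym2 V), ∃ e, IsCyc G C → e ∈ C := by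
    intro C
    by_cases hC : IsCyc G C
    · obtain ⟨e, he⟩ := cyc_nonempty hC
      exact ⟨e, fun _ => he⟩
    · obtain ⟨v⟩ := hG.1.nonempty
      exact ⟨s(v, v), fun h => absurd h hC⟩
  choose rep hrep using hch
  set T : Finset (Sym2 V) := (cycs G).image rep with hT
  have hac : (G.deleteEdges (T : Set (Sym2 V))).IsAcyclic := by
    intro a p hp
    have hle : G.deleteEdges (T : Set (Sym2 V)) ≤ G := SimpleGraph.deleteEdges_le _
    have hC : IsCyc G p.edges.toFinset := ⟨a, p.mapLe hle, hp.mapLe hle, by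
      rw [SimpleGraph.Walk.edges_mapLe_eq_edges]⟩
    have h1 := hrep _ hC
    rw [List.mem_toFinset] at h1
    have h2 := p.edges_subset_edgeSet h1
    rw [SimpleGraph.edgeSet_deleteEdges] at h2
    apply h2.2
    exact Finset.mem_image_of_mem _ (by simp [cycs, hC])
  obtain ⟨F, hF1, hF2, hF3⟩ := hG.1.exists_isTree_le_of_le_of_isAcyclic
    (SimpleGraph.deleteEdges_le _) hac
  have h1 := hF3.card_edgeFinset
  have h2 : G.edgeFinset ⊆ F.edgeFinset ∪ T := by
    intro e he
    rw [Finset.mem_union]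
    by_cases h : e ∈ T
    · exact Or.inr h
    · left
      rw [SimpleGraph.mem_edgeFinset]
      apply SimpleGraph.edgeSet_mono hF1
      rw [SimpleGraph.edgeSet_deleteEdges]
      exact ⟨by simpa using he, by simpa using h⟩
  have h3 := Finset.card_le_card h2
  have h4 := Finset.card_union_le F.edgeFinset T
  have h5 : T.card ≤ (cycs G).card := Finset.card_image_le
  omega

/-- a cyclic parametrization of the cycle with edge set `C` -/
structure CycP (G : SimpleGraph V) (C : Finset (Sym2 V)) (s : ℕ) (c : ZMod (s + 3) → V) : Prop where
  inj : Function.Injective c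
  adj : ∀ i, G.Adj (c i) (c (i + 1))
  mem : ∀ e, e ∈ C ↔ ∃ i, e = s(c i, c (i + 1))
  sep : ∀ i j, (G.deleteEdges (C : Set (Sym2 V))).Reachable (c i) (c j) → i = j

lemma exists_param {C : Finset (Sym2 V)} (hC : IsCyc G C) :
    ∃ (s : ℕ) (c : ZMod (s + 3) → V), Function.Injective c ∧ (∀ i, G.Adj (c i) (c (i + 1))) ∧
      (∀ e, e ∈ C ↔ ∃ i, e = s(c i, c (i + 1))) := by
  obtain ⟨a, p, hp, rfl⟩ := hC
  obtain ⟨s, hs⟩ : ∃ s, p.length = s + 3 := ⟨p.length - 3, by have := hp.three_le_length; omega⟩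
  have hsucc : ∀ i : ZMod (s + 3), p.getVert (i + 1).val = p.getVert (i.val + 1) := by
    intro i
    have hlt := ZMod.val_lt i
    haveI : Fact (1 < s + 3) := ⟨by omega⟩
    rw [ZMod.val_add, ZMod.val_one]
    rcases Nat.lt_or_ge (i.val + 1) (s + 3) with h | h
    · rw [Nat.mod_eq_of_lt h]
    · have : i.val + 1 = s + 3 := by omega
      rw [this, Nat.mod_self, ← hs]; simp
  refine ⟨s, fun i => p.getVert i.val, ?_, ?_, ?_⟩
  · intro i j h
    apply ZMod.val_injective
    have h1 := ZMod.val_lt i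
    have h2 := ZMod.val_lt j
    exact hp.getVert_injOn' (by simp only [Set.mem_ofPred_eq]; omega)
      (by simp only [Set.mem_ofPred_eq]; omega) h
  · intro i
    have h1 := ZMod.val_lt i
    show G.Adj (p.getVert i.val) (p.getVert (i+1).val)
    rw [hsucc]
    exact p.adj_getVert_succ (by omega)
  · intro e
    induction e with
    | _ u v =>
      rw [List.mem_toFinset, SimpleGraph.Walk.mk_mem_edges_iff_exists]
      constructor
      · rintro ⟨i, hi, h⟩
        refine ⟨(i : ZMod (s+3)), ?_⟩
        show _ = s(p.getVert _, p.getVert _)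
        rw [hsucc, ZMod.val_natCast, Nat.mod_eq_of_lt (by omega), h]
      · rintro ⟨i, h⟩
        have h1 := ZMod.val_lt i
        refine ⟨i.val, by omega, ?_⟩
        rw [h]
        show _ = s(p.getVert _, p.getVert _)
        rw [hsucc]

lemma one_add_one_ne_zmod (s : ℕ) : (1 + 1 : ZMod (s + 3)) ≠ 0 := by
  have : ((2 : ℕ) : ZMod (s + 3)) ≠ 0 := by
    rw [Ne, ZMod.natCast_eq_zero_iff]
    intro h
    have := Nat.le_of_dvd (by norm_num) h
    omega
  push_cast at this
  rwa [one_add_one_eq_two]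

lemma edge_inj {s : ℕ} {c : ZMod (s + 3) → V} (hinj : Function.Injective c) :
    Function.Injective fun i => s(c i, c (i + 1)) := by
  intro i j h
  rcases Sym2.eq_iff.1 h with ⟨h1, _⟩ | ⟨h1, h2⟩
  · exact hinj h1
  · exfalso
    have h1 := hinj h1
    have h2 := hinj h2
    rw [h1] at h2
    apply one_add_one_ne_zmod s
    have : j + (1 + 1) = j + 0 := by rw [← add_assoc, h2, add_zero]
    exact add_left_cancel this

lemma exists_cycP (hG : IsCactus G) {C : Finset (Sym2 V)} (hC : IsCyc G C) :
    ∃ (s : ℕ) (c : ZMod (s + 3) → V), CycP G C s c := by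
  obtain ⟨s, c, hinj, hadj, hmem⟩ := exists_param hC
  refine ⟨s, c, hinj, hadj, hmem, ?_⟩
  intro i j hr
  by_contra hij
  set e := s(c i, c (i + 1)) with he
  set e' := s(c (i - 1), c (i - 1 + 1)) with he'
  have heC : e ∈ C := (hmem e).2 ⟨i, rfl⟩
  have heC' : e' ∈ C := (hmem e').2 ⟨i - 1, rfl⟩
  have hee : e ≠ e' := by
    intro h
    have := edge_inj hinj h
    have h1 : (1 : ZMod (s + 3)) = 0 := by
      have : i + (-1) = i + 0 := by rw [← sub_eq_add_neg, ← this, add_zero]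
      have := add_left_cancel this
      rwa [neg_eq_zero] at this
    apply one_add_one_ne_zmod s
    rw [h1, add_zero]
  set G' := G.deleteEdges {e'} with hG'
  have hbr : ¬ (G'.deleteEdges {e}).Reachable (c i) (c (i + 1)) := by
    intro hre
    have hadj' : G'.Adj (c i) (c (i + 1)) := by
      rw [hG', SimpleGraph.deleteEdges_adj]
      exact ⟨hadj i, by simpa using hee⟩
    obtain ⟨u, p, hp, hep⟩ := SimpleGraph.adj_and_reachable_delete_edges_iff_exists_cycle.1
      ⟨hadj', hre⟩
    have hle : G' ≤ G := SimpleGraph.deleteEdges_le _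
    have hD : IsCyc G p.edges.toFinset := ⟨u, p.mapLe hle, hp.mapLe hle, by
      rw [SimpleGraph.Walk.edges_mapLe_eq_edges]⟩
    have := cyc_eq hG hC hD heC (by simpa using hep)
    rw [this, List.mem_toFinset] at heC'
    have h2 := p.edges_subset_edgeSet heC'
    rw [hG', SimpleGraph.edgeSet_deleteEdges] at h2
    exact h2.2 rfl
  have harc : ∀ t : ℕ, t + 1 < s + 3 →
      (G'.deleteEdges {e}).Reachable (c (i + 1)) (c (i + 1 + t)) := by
    intro t
    induction t with
    | zero => intro _; simp
    | succ t ih =>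
      intro ht
      refine (ih (by omega)).trans ?_
      apply SimpleGraph.Adj.reachable
      have hnz : ∀ q : ℕ, 0 < q → q < s + 3 → ((q : ℕ) : ZMod (s+3)) ≠ 0 := by
        intro q h0 h1
        rw [Ne, ZMod.natCast_eq_zero_iff]
        intro h
        have := Nat.le_of_dvd h0 h
        omega
      have h1 := hnz (t + 1) (by omega) (by omega)
      have h2 := hnz (t + 2) (by omega) (by omega)
      have e1 : i + 1 + ((t + 1 : ℕ) : ZMod (s+3)) = i + 1 + t + 1 := by push_cast; ring
      rw [e1, SimpleGraph.deleteEdges_adj, hG', SimpleGraph.deleteEdges_adj]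
      refine ⟨⟨hadj _, ?_⟩, ?_⟩
      · intro h
        have := edge_inj hinj (Set.mem_singleton_iff.1 h)
        apply h2
        push_cast
        linear_combination this
      · intro h
        have := edge_inj hinj (Set.mem_singleton_iff.1 h)
        apply h1
        push_cast
        linear_combination this
  apply hbr
  have hle : G.deleteEdges (C : Set (Sym2 V)) ≤ G'.deleteEdges {e} := by
    intro a b hab
    rw [SimpleGraph.deleteEdges_adj] at hab
    rw [SimpleGraph.deleteEdges_adj, hG', SimpleGraph.deleteEdges_adj]
    refine ⟨⟨hab.1, ?_⟩, ?_⟩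
    · intro h; rw [Set.mem_singleton_iff] at h; exact hab.2 (by rw [h]; exact heC')
    · intro h; rw [Set.mem_singleton_iff] at h; exact hab.2 (by rw [h]; exact heC)
  refine (hr.mono hle).trans ?_
  have h := harc (j - i - 1).val ?_
  · rw [ZMod.natCast_zmod_val] at h
    have e1 : i + 1 + (j - i - 1) = j := by ring
    rw [e1] at h
    exact h.symm
  · have h1 := ZMod.val_lt (j - i - 1)
    by_contra h2
    have h3 : (j - i - 1).val = s + 2 := by omega
    have h4 : ((s + 2 : ℕ) : ZMod (s + 3)) = j - i - 1 := by
      rw [← h3, ZMod.natCast_zmod_val]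
    have h5 : ((s + 3 : ℕ) : ZMod (s + 3)) = 0 := ZMod.natCast_self _
    apply hij
    push_cast at h4 h5
    linear_combination h4 - h5

end partB

section partC
variable {V : Type*} [Fintype V] {G : SimpleGraph V}

lemma dist_weak (hc : G.Connected) (τ : V → V)
    (hτ : ∀ u v, G.Adj u v → τ u = τ v ∨ G.Adj (τ u) (τ v)) (a b : V) :
    G.dist (τ a) (τ b) ≤ G.dist a b := by
  obtain ⟨p, hp⟩ := hc.exists_walk_length_eq_dist a b
  rw [← hp]
  clear hp
  induction p with
  | nil => simp
  | cons h p ih =>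
    rename_i u v w
    rw [SimpleGraph.Walk.length_cons]
    rcases hτ _ _ h with h1 | h1
    · rw [h1]; omega
    · have := dist_lip G hc h1 (τ w)
      rw [SimpleGraph.dist_comm, SimpleGraph.dist_comm (u := τ w)] at this
      omega

lemma CycP.shift (hc : G.Connected) {C : Finset (Sym2 V)} {s : ℕ} {c : ZMod (s + 3) → V}
    (h : CycP G C s c) (d i j : ZMod (s + 3)) :
    G.dist (c (i + d)) (c (j + d)) ≤ G.dist (c i) (c j) := by
  have hex : ∀ w, ∃ i, (G.deleteEdges (C : Set (Sym2 V))).Reachable (c i) w := by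
    intro w
    obtain ⟨p⟩ := hc.preconnected w (c 0)
    generalize hz : c 0 = z at p
    induction p with
    | nil => exact ⟨0, by rw [hz]⟩
    | cons hadj p ih =>
      rename_i u v w
      obtain ⟨i, hi⟩ := ih hz
      by_cases hm : s(u, v) ∈ C
      · obtain ⟨j, hj⟩ := (h.mem _).1 hm
        rcases Sym2.eq_iff.1 hj with ⟨h1, _⟩ | ⟨h1, _⟩
        · exact ⟨j, by rw [h1]⟩
        · exact ⟨j + 1, by rw [h1]⟩
      · refine ⟨i, hi.trans (SimpleGraph.Adj.reachable ?_)⟩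
        rw [SimpleGraph.deleteEdges_adj]
        exact ⟨hadj.symm, by rw [Sym2.eq_swap]; exact hm⟩
  choose ρ hρ using hex
  have hρc : ∀ i, ρ (c i) = i := fun i => h.sep _ _ (hρ (c i))
  have key := dist_weak hc (fun w => c (ρ w + d)) ?_ (c i) (c j)
  · simpa only [hρc] using key
  · intro u v huv
    by_cases hm : s(u, v) ∈ C
    · obtain ⟨j, hj⟩ := (h.mem _).1 hm
      have h3 := h.adj (j + d)
      have h4 : j + d + 1 = j + 1 + d := by ring
      rw [h4] at h3
      rcases Sym2.eq_iff.1 hj with ⟨h1, h2⟩ | ⟨h1, h2⟩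
      · right; simp only [h1, h2, hρc]; exact h3
      · right; simp only [h1, h2, hρc]; exact h3.symm
    · left
      have : (G.deleteEdges (C : Set (Sym2 V))).Adj u v := by
        rw [SimpleGraph.deleteEdges_adj]; exact ⟨huv, hm⟩
      have := h.sep _ _ (((hρ u).trans this.reachable).trans (hρ v).symm)
      simp only [this]

lemma CycP.shift_eq (hc : G.Connected) {C : Finset (Sym2 V)} {s : ℕ} {c : ZMod (s + 3) → V}
    (h : CycP G C s c) (d i j : ZMod (s + 3)) :
    G.dist (c (i + d)) (c (j + d)) = G.dist (c i) (c j) := by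
  apply le_antisymm (h.shift hc d i j)
  have := h.shift hc (-d) (i + d) (j + d)
  simpa using this

lemma CycP.eq_image {C : Finset (Sym2 V)} {s : ℕ} {c : ZMod (s + 3) → V}
    (h : CycP G C s c) : C = Finset.univ.image fun i => s(c i, c (i + 1)) := by
  ext e
  rw [h.mem]
  simp [eq_comm]

lemma CycP.card {C : Finset (Sym2 V)} {s : ℕ} {c : ZMod (s + 3) → V}
    (h : CycP G C s c) : C.card = s + 3 := by
  rw [h.eq_image, Finset.card_image_of_injective _ (edge_inj h.inj), Finset.card_univ, ZMod.card]

lemma CycP.sum {C : Finset (Sym2 V)} {s : ℕ} {c : ZMod (s + 3) → V}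
    (h : CycP G C s c) {M : Type*} [AddCommMonoid M] (g : Sym2 V → M) :
    ∑ e ∈ C, g e = ∑ i, g s(c i, c (i + 1)) := by
  rw [h.eq_image, Finset.sum_image]
  intro i _ j _ hij
  exact edge_inj h.inj hij

lemma CycP.sub {C : Finset (Sym2 V)} {s : ℕ} {c : ZMod (s + 3) → V}
    (h : CycP G C s c) : C ⊆ G.edgeFinset := by
  intro e he
  obtain ⟨i, rfl⟩ := (h.mem e).1 he
  simpa using h.adj i

lemma CycP.const (hc : G.Connected) {C : Finset (Sym2 V)} {s : ℕ} {c : ZMod (s + 3) → V}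
    (h : CycP G C s c) (i : ZMod (s + 3)) :
    ∑ f ∈ C, (eDist G f (c i) : ℤ) = ∑ f ∈ C, (eDist G f (c 0) : ℤ) := by
  rw [h.sum, h.sum]
  symm
  refine Fintype.sum_equiv (Equiv.addRight i) _ _ fun j => ?_
  simp only [eDist_mk, Equiv.coe_addRight]
  have h1 := h.shift_eq hc i j 0
  have h2 := h.shift_eq hc i (j + 1) 0
  rw [zero_add] at h1 h2
  have e : j + 1 + i = j + i + 1 := by ring
  rw [e] at h2
  rw [h1, h2]

lemma CycP.diff (hc : G.Connected) {C : Finset (Sym2 V)} {s : ℕ} {c : ZMod (s + 3) → V}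
    (h : CycP G C s c) (i j : ZMod (s + 3)) :
    totD G (c i) - totD G (c j) =
      ∑ f ∈ G.edgeFinset \ C, ((eDist G f (c i) : ℤ) - eDist G f (c j)) := by
  unfold totD
  rw [← Finset.sum_sdiff h.sub, ← Finset.sum_sdiff h.sub, h.const hc i, h.const hc j,
    Finset.sum_sub_distrib]
  ring

lemma abs_sum_le_card {α : Type*} (A : Finset α) (d : α → ℤ) (hd : ∀ f ∈ A, |d f| ≤ 1) :
    |∑ f ∈ A, d f| ≤ A.card := by
  refine (Finset.abs_sum_le_sum_abs _ _).trans ?_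
  refine (Finset.sum_le_sum hd).trans ?_
  simp

lemma all_same {α : Type*} (A : Finset α) (d : α → ℤ) (hd : ∀ f ∈ A, |d f| ≤ 1)
    (h : (∑ f ∈ A, d f) ^ 2 = (A.card : ℤ) ^ 2) :
    (∀ f ∈ A, d f = 1) ∨ (∀ f ∈ A, d f = -1) := by
  rcases sq_eq_sq_iff_eq_or_eq_neg.1 h with h | h
  · left
    have : ∑ f ∈ A, (1 - d f) = 0 := by rw [Finset.sum_sub_distrib, h]; simp
    rw [Finset.sum_eq_zero_iff_of_nonneg] at this
    · intro f hf; have := this f hf; linarith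
    · intro f hf; have := abs_le.1 (hd f hf); linarith
  · right
    have : ∑ f ∈ A, (1 + d f) = 0 := by rw [Finset.sum_add_distrib, h]; simp
    rw [Finset.sum_eq_zero_iff_of_nonneg] at this
    · intro f hf; have := this f hf; linarith
    · intro f hf; have := abs_le.1 (hd f hf); linarith

lemma eDist_abs (hc : G.Connected) {u v : V} (h : G.Adj u v) (f : Sym2 V) :
    |(eDist G f u : ℤ) - eDist G f v| ≤ 1 := by
  have h1 := eDist_lip G hc h f
  have h2 := eDist_lip G hc h.symm f
  rw [abs_le]; constructor <;> omega

lemma CycP.card_sdiff {C : Finset (Sym2 V)} {s : ℕ} {c : ZMod (s + 3) → V}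
    (h : CycP G C s c) : ((G.edgeFinset \ C).card : ℤ) = G.edgeFinset.card - (s + 3) := by
  have := Finset.card_sdiff_add_card_eq_card h.sub
  rw [h.card] at this
  omega

lemma CycP.diff_abs (hc : G.Connected) {C : Finset (Sym2 V)} {s : ℕ} {c : ZMod (s + 3) → V}
    (h : CycP G C s c) (i : ZMod (s + 3)) :
    |totD G (c i) - totD G (c (i + 1))| ≤ (G.edgeFinset.card : ℤ) - (s + 3) := by
  rw [h.diff hc, ← h.card_sdiff]
  exact abs_sum_le_card _ _ fun f _ => eDist_abs hc (h.adj i) f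

lemma tri_ineq (a b c M : ℚ) (ha : |a| ≤ M) (hb : |b| ≤ M) (hc : |c| ≤ M) (h : a + b + c = 0) :
    a ^ 2 + b ^ 2 + c ^ 2 ≤ 2 * M ^ 2 := by
  rw [abs_le] at *
  have e : c = - a - b := by linarith
  subst e
  obtain ⟨a1, a2⟩ := ha
  obtain ⟨b1, b2⟩ := hb
  obtain ⟨c1, c2⟩ := hc
  rcases le_total 0 a with h1 | h1 <;> rcases le_total 0 b with h2 | h2 <;>
    rcases le_total 0 (a + b) with h3 | h3 <;> nlinarith

lemma CycP.excess (hc : G.Connected) {C : Finset (Sym2 V)} {s : ℕ} {c : ZMod (s + 3) → V}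
    (h : CycP G C s c) {m : ℕ} (hm : G.edgeFinset.card = m) (h15 : 15 < m) :
    6 * (m : ℚ) - 15 ≤ ∑ e ∈ C, (gw G m e - (2 * m - 1) / 4) ∧
    (∑ e ∈ C, (gw G m e - (2 * m - 1) / 4) = 6 * (m : ℚ) - 15 →
      s = 1 ∧ ∀ i, (totD G (c i) - totD G (c (i + 1))) ^ 2 = ((m : ℤ) - 4) ^ 2) := by
  have hle : s + 3 ≤ m := by
    rw [← hm, ← h.card]; exact Finset.card_le_card h.sub
  have hm' : (15 : ℚ) < m := by exact_mod_cast h15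
  have hab := h.diff_abs hc
  rw [hm] at hab
  rw [h.sum]
  simp only [gw_mk]
  rcases Nat.eq_zero_or_pos s with rfl | hs
  · have key : 6 * (m : ℚ) - 15 < ∑ i : ZMod (0 + 3),
        (((m : ℚ) ^ 2 - ((totD G (c i) - totD G (c (i + 1)) : ℤ) : ℚ) ^ 2) / 4 - (2 * m - 1) / 4) := by
      have e1 := hab (0 : Fin 3)
      have e2 := hab (1 : Fin 3)
      have e3 := hab (2 : Fin 3)
      change _ < ∑ i : Fin 3, _
      rw [Fin.sum_univ_three]
      have f1 : (0 : Fin 3) + 1 = 1 := rfl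
      have f2 : (1 : Fin 3) + 1 = 2 := rfl
      have f3 : (2 : Fin 3) + 1 = 0 := rfl
      change |totD G (c (0 : Fin 3)) - totD G (c (1 : Fin 3))| ≤ _ at e1
      change |totD G (c (1 : Fin 3)) - totD G (c (2 : Fin 3))| ≤ _ at e2
      change |totD G (c (2 : Fin 3)) - totD G (c (0 : Fin 3))| ≤ _ at e3
      change _ < ((m : ℚ) ^ 2 - ((totD G (c (0 : Fin 3)) - totD G (c (1 : Fin 3)) : ℤ) : ℚ) ^ 2) / 4 - (2 * m - 1) / 4
        + (((m : ℚ) ^ 2 - ((totD G (c (1 : Fin 3)) - totD G (c (2 : Fin 3)) : ℤ) : ℚ) ^ 2) / 4 - (2 * m - 1) / 4)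
        + (((m : ℚ) ^ 2 - ((totD G (c (2 : Fin 3)) - totD G (c (0 : Fin 3)) : ℤ) : ℚ) ^ 2) / 4 - (2 * m - 1) / 4)
      have t := tri_ineq ((totD G (c (0 : Fin 3)) - totD G (c (1 : Fin 3)) : ℤ) : ℚ)
        ((totD G (c (1 : Fin 3)) - totD G (c (2 : Fin 3)) : ℤ) : ℚ)
        ((totD G (c (2 : Fin 3)) - totD G (c (0 : Fin 3)) : ℤ) : ℚ) ((m : ℚ) - 3)
        (by have := e1; push_cast at this; exact_mod_cast this)
        (by have := e2; push_cast at this; exact_mod_cast this)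
        (by have := e3; push_cast at this; exact_mod_cast this) (by push_cast; ring)
      nlinarith
    exact ⟨key.le, fun h => absurd h key.ne'⟩
  · set r : ℚ := (s : ℚ) + 3 with hr
    have hs1 : (1 : ℚ) ≤ s := by exact_mod_cast hs
    have hrm : (s : ℚ) + 3 ≤ m := by exact_mod_cast hle
    have hterm : ∀ i, ((m : ℚ) ^ 2 - ((m : ℚ) - r) ^ 2) / 4 - (2 * m - 1) / 4 ≤
        ((m : ℚ) ^ 2 - ((totD G (c i) - totD G (c (i + 1)) : ℤ) : ℚ) ^ 2) / 4 - (2 * m - 1) / 4 := by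
      intro i
      have h1 : |((totD G (c i) - totD G (c (i + 1)) : ℤ) : ℚ)| ≤ (m : ℚ) - r := by
        rw [hr]; have := hab i; exact_mod_cast this
      have := sq_le_sq' (abs_le.1 h1).1 (abs_le.1 h1).2
      linarith
    have hsum : ∑ i : ZMod (s + 3), (((m : ℚ) ^ 2 - ((m : ℚ) - r) ^ 2) / 4 - (2 * m - 1) / 4) =
        r * (r - 1) * (2 * m - r - 1) / 4 := by
      rw [Finset.sum_const, Finset.card_univ, ZMod.card, nsmul_eq_mul]
      push_cast
      rw [← hr]; ring
    have hS := Finset.sum_le_sum fun i (_ : i ∈ (Finset.univ : Finset (ZMod (s + 3)))) => hterm i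
    rw [hsum] at hS
    have hpoly : r * (r - 1) * (2 * m - r - 1) / 4 - (6 * (m : ℚ) - 15) =
        (s - 1) * ((6 + s) * (2 * m - 4 - s) - 12) / 4 := by rw [hr]; ring
    have hpos : 0 < (6 + (s : ℚ)) * (2 * m - 4 - s) - 12 := by nlinarith
    have hge : 0 ≤ ((s : ℚ) - 1) * ((6 + s) * (2 * m - 4 - s) - 12) / 4 := by
      apply div_nonneg _ (by norm_num)
      exact mul_nonneg (by linarith) hpos.le
    refine ⟨by linarith, fun heq => ?_⟩
    have hz : ((s : ℚ) - 1) * ((6 + s) * (2 * m - 4 - s) - 12) / 4 = 0 := by linarith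
    have hs' : (s : ℚ) = 1 := by
      have : ((s : ℚ) - 1) = 0 := by
        rcases mul_eq_zero.1 ((div_eq_zero_iff.1 hz).resolve_right (by norm_num)) with h | h
        · exact h
        · exact absurd h hpos.ne'
      linarith
    refine ⟨by exact_mod_cast hs', fun i => ?_⟩
    have hSe : ∑ i : ZMod (s + 3), (((m : ℚ) ^ 2 - ((m : ℚ) - r) ^ 2) / 4 - (2 * m - 1) / 4) =
        ∑ i : ZMod (s + 3), (((m : ℚ) ^ 2 - ((totD G (c i) - totD G (c (i + 1)) : ℤ) : ℚ) ^ 2) / 4 - (2 * m - 1) / 4) := by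
      rw [hsum]; linarith
    have := (Finset.sum_eq_sum_iff_of_le (fun i _ => hterm i)).1 hSe i (Finset.mem_univ i)
    have h2 : (((totD G (c i) - totD G (c (i + 1)) : ℤ) : ℚ)) ^ 2 = ((m : ℚ) - r) ^ 2 := by linarith
    rw [hr, hs'] at h2
    have h3 : ((m : ℚ) - (1 + 3)) = ((m - 4 : ℤ) : ℚ) := by push_cast; ring
    rw [h3] at h2
    exact_mod_cast h2

end partC

section partD
variable {V : Type*} [Fintype V] {G : SimpleGraph V}

lemma totD_sub (u v : V) : totD G u - totD G v =
    ∑ f ∈ G.edgeFinset, ((eDist G f u : ℤ) - eDist G f v) := by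
  unfold totD; rw [Finset.sum_sub_distrib]

lemma eDist_one (hc : G.Connected) {u v a : V} (h : G.Adj u v) (hav : v ≠ a) :
    eDist G s(u, a) u = 0 ∧ eDist G s(u, a) v = 1 := by
  have h1 : eDist G s(u, a) u = 0 := by rw [eDist_zero_iff G hc]; simp
  refine ⟨h1, ?_⟩
  have h2 := eDist_lip G hc h.symm s(u, a)
  have h3 : eDist G s(u, a) v ≠ 0 := by
    rw [Ne, eDist_eq_zero G hc]
    rintro (h' | h')
    · exact h.ne h'.symm
    · exact hav h'
  omega

lemma edge_diff (hc : G.Connected) {u v : V} (h : G.Adj u v) : totD G u - totD G v =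
    ∑ f ∈ G.edgeFinset.erase s(u, v), ((eDist G f u : ℤ) - eDist G f v) := by
  rw [totD_sub, ← Finset.add_sum_erase _ _ (show s(u, v) ∈ G.edgeFinset by simpa using h)]
  have h1 : eDist G s(u, v) u = 0 := by rw [eDist_zero_iff G hc]; simp
  have h2 : eDist G s(u, v) v = 0 := by rw [eDist_zero_iff G hc]; simp
  rw [h1, h2]; simp

lemma card_erase_edge {u v : V} (h : G.Adj u v) :
    ((G.edgeFinset.erase s(u, v)).card : ℤ) = G.edgeFinset.card - 1 := by
  have := Finset.card_erase_add_one (show s(u, v) ∈ G.edgeFinset by simpa using h)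
  omega

lemma edge_abs (hc : G.Connected) {u v : V} (h : G.Adj u v) :
    |totD G u - totD G v| ≤ (G.edgeFinset.card : ℤ) - 1 := by
  rw [edge_diff hc h, ← card_erase_edge h]
  exact abs_sum_le_card _ _ fun f _ => eDist_abs hc h f

lemma gw_ge (hc : G.Connected) {m : ℕ} (hm : G.edgeFinset.card = m) (h15 : 15 < m)
    {e : Sym2 V} (he : e ∈ G.edgeFinset) : 0 ≤ gw G m e - (2 * m - 1) / 4 := by
  induction e with
  | _ u v =>
    have h : G.Adj u v := by simpa using he
    rw [gw_mk]
    have h1 := edge_abs hc h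
    rw [hm] at h1
    have h2 : |((totD G u - totD G v : ℤ) : ℚ)| ≤ (m : ℚ) - 1 := by exact_mod_cast h1
    have := sq_le_sq' (abs_le.1 h2).1 (abs_le.1 h2).2
    linarith

/-- equality case: a noncycle edge is pendant -/
lemma gw_eq (hc : G.Connected) {m : ℕ} (hm : G.edgeFinset.card = m)
    {u v : V} (h : G.Adj u v) (he : gw G m s(u, v) - (2 * m - 1) / 4 = 0) :
    (∀ w, G.Adj u w → w = v) ∨ (∀ w, G.Adj v w → w = u) := by
  rw [gw_mk] at he
  have h2 : (((totD G u - totD G v : ℤ) : ℚ)) ^ 2 = (((m : ℤ) - 1 : ℤ) : ℚ) ^ 2 := by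
    push_cast at he ⊢; linarith
  have h3 : (totD G u - totD G v) ^ 2 = ((m : ℤ) - 1) ^ 2 := by exact_mod_cast h2
  rw [← hm, ← card_erase_edge h, edge_diff hc h] at h3
  rcases all_same _ _ (fun f _ => eDist_abs hc h f) h3 with h4 | h4
  · left
    intro w hw
    by_contra hne
    have := h4 s(u, w) (by
      rw [Finset.mem_erase]
      refine ⟨?_, by simpa using hw⟩
      intro h5
      rcases Sym2.eq_iff.1 h5 with h6 | h6
      · exact hne h6.2
      · exact h.ne h6.1)
    obtain ⟨h5, h6⟩ := eDist_one hc h (fun h => hne h.symm)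
    rw [h5, h6] at this
    norm_num at this
  · right
    intro w hw
    by_contra hne
    have := h4 s(v, w) (by
      rw [Finset.mem_erase]
      refine ⟨?_, by simpa using hw⟩
      intro h5
      rcases Sym2.eq_iff.1 h5 with h6 | h6
      · exact h.ne h6.1.symm
      · exact hne h6.2)
    obtain ⟨h5, h6⟩ := eDist_one hc h.symm (fun h => hne h.symm)
    rw [h5, h6] at this
    norm_num at this

lemma edge_diff3 (hc : G.Connected) {x y a b : V} (h : G.Adj x y) (ha : G.Adj x a) (hb : G.Adj y b)
    (hay : a ≠ y) (hbx : b ≠ x) : totD G x - totD G y =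
    ∑ f ∈ ((G.edgeFinset.erase s(x, y)).erase s(x, a)).erase s(y, b),
      ((eDist G f x : ℤ) - eDist G f y) ∧
    ((((G.edgeFinset.erase s(x, y)).erase s(x, a)).erase s(y, b)).card : ℤ)
      = G.edgeFinset.card - 3 := by
  have m1 : s(x, a) ∈ G.edgeFinset.erase s(x, y) := by
    rw [Finset.mem_erase]
    refine ⟨fun h5 => ?_, by simpa using ha⟩
    rcases Sym2.eq_iff.1 h5 with h6 | h6
    · exact hay h6.2
    · exact h.ne h6.1
  have m2 : s(y, b) ∈ (G.edgeFinset.erase s(x, y)).erase s(x, a) := by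
    rw [Finset.mem_erase, Finset.mem_erase]
    refine ⟨fun h5 => ?_, fun h5 => ?_, by simpa using hb⟩
    · rcases Sym2.eq_iff.1 h5 with h6 | h6
      · exact h.ne h6.1.symm
      · exact hbx h6.2
    · rcases Sym2.eq_iff.1 h5 with h6 | h6
      · exact h.ne h6.1.symm
      · exact hbx h6.2
  constructor
  · rw [edge_diff hc h, ← Finset.add_sum_erase _ _ m1, ← Finset.add_sum_erase _ _ m2]
    obtain ⟨h1, h2⟩ := eDist_one hc h hay.symm
    obtain ⟨h3, h4⟩ := eDist_one hc h.symm hbx.symm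
    rw [h1, h2, h3, h4]
    push_cast; ring
  · have := Finset.card_erase_add_one m1
    have := Finset.card_erase_add_one m2
    have := card_erase_edge h
    omega

lemma exists_other {x y : V} (hdx : 2 ≤ G.degree x) : ∃ a, G.Adj x a ∧ a ≠ y := by
  have : 1 < (G.neighborFinset x).card := hdx
  obtain ⟨a, ha, hne⟩ := Finset.exists_mem_ne this y
  exact ⟨a, by simpa using ha, hne⟩

lemma xy_ge (hc : G.Connected) {m : ℕ} (hm : G.edgeFinset.card = m) (h15 : 15 < m)
    {x y : V} (h : G.Adj x y) (hdx : 2 ≤ G.degree x) (hdy : 2 ≤ G.degree y) :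
    (m : ℚ) - 2 ≤ gw G m s(x, y) - (2 * m - 1) / 4 := by
  obtain ⟨a, ha, hay⟩ := exists_other (y := y) hdx
  obtain ⟨b, hb, hbx⟩ := exists_other (y := x) hdy
  obtain ⟨h1, h2⟩ := edge_diff3 hc h ha hb hay hbx
  have h3 : |totD G x - totD G y| ≤ (G.edgeFinset.card : ℤ) - 3 := by
    rw [h1, ← h2]
    exact abs_sum_le_card _ _ fun f _ => eDist_abs hc h f
  rw [hm] at h3
  have h4 : |((totD G x - totD G y : ℤ) : ℚ)| ≤ (m : ℚ) - 3 := by exact_mod_cast h3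
  have := sq_le_sq' (abs_le.1 h4).1 (abs_le.1 h4).2
  rw [gw_mk]
  linarith

/-- equality case for the edge `xy`. -/
lemma xy_eq (hc : G.Connected) {m : ℕ} (hm : G.edgeFinset.card = m)
    {x y : V} (h : G.Adj x y) (hdx : 2 ≤ G.degree x) (hdy : 2 ≤ G.degree y)
    (he : gw G m s(x, y) - (2 * m - 1) / 4 = (m : ℚ) - 2) :
    (∃ b, b ≠ x ∧ G.Adj y b ∧ ∀ w, G.Adj y w → w = x ∨ w = b) ∨
    (∃ a, a ≠ y ∧ G.Adj x a ∧ ∀ w, G.Adj x w → w = y ∨ w = a) := by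
  obtain ⟨a, ha, hay⟩ := exists_other (y := y) hdx
  obtain ⟨b, hb, hbx⟩ := exists_other (y := x) hdy
  obtain ⟨h1, h2⟩ := edge_diff3 hc h ha hb hay hbx
  rw [gw_mk] at he
  have h3 : (((totD G x - totD G y : ℤ) : ℚ)) ^ 2 = (((m : ℤ) - 3 : ℤ) : ℚ) ^ 2 := by
    push_cast at he ⊢; linarith
  have h4 : (totD G x - totD G y) ^ 2 = ((m : ℤ) - 3) ^ 2 := by exact_mod_cast h3
  rw [← hm, ← h2, h1] at h4
  rcases all_same _ _ (fun f _ => eDist_abs hc h f) h4 with h5 | h5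
  · right
    refine ⟨a, hay, ha, fun w hw => ?_⟩
    by_contra! hne
    have := h5 s(x, w) (by
      rw [Finset.mem_erase, Finset.mem_erase, Finset.mem_erase]
      refine ⟨fun h5 => ?_, fun h5 => ?_, fun h5 => ?_, by simpa using hw⟩
      · rcases Sym2.eq_iff.1 h5 with h6 | h6
        · exact h.ne h6.1
        · exact hbx h6.1.symm
      · rcases Sym2.eq_iff.1 h5 with h6 | h6
        · exact hne.2 h6.2
        · exact ha.ne h6.1
      · rcases Sym2.eq_iff.1 h5 with h6 | h6
        · exact hne.1 h6.2
        · exact h.ne h6.1)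
    obtain ⟨h6, h7⟩ := eDist_one hc h hne.1.symm
    rw [h6, h7] at this
    norm_num at this
  · left
    refine ⟨b, hbx, hb, fun w hw => ?_⟩
    by_contra! hne
    have := h5 s(y, w) (by
      rw [Finset.mem_erase, Finset.mem_erase, Finset.mem_erase]
      refine ⟨fun h5 => ?_, fun h5 => ?_, fun h5 => ?_, by simpa using hw⟩
      · rcases Sym2.eq_iff.1 h5 with h6 | h6
        · exact hne.2 h6.2
        · exact hb.ne h6.1
      · rcases Sym2.eq_iff.1 h5 with h6 | h6
        · exact h.ne h6.1.symm
        · exact hay h6.1.symm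
      · rcases Sym2.eq_iff.1 h5 with h6 | h6
        · exact h.ne h6.1.symm
        · exact hne.1 h6.2)
    obtain ⟨h6, h7⟩ := eDist_one hc h.symm hne.1.symm
    rw [h6, h7] at this
    norm_num at this

lemma xy_not_cyc (hc : G.Connected) {x y : V}
    (hcut : ¬ (G.deleteEdges {s(x, y)}).Connected) {C : Finset (Sym2 V)} (hC : IsCyc G C) :
    s(x, y) ∉ C := by
  intro hm
  obtain ⟨a, p, hp, rfl⟩ := hC
  rw [List.mem_toFinset] at hm
  have := SimpleGraph.adj_and_reachable_delete_edges_iff_exists_cycle.2 ⟨a, p, hp, hm⟩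
  apply hcut
  apply hc.connected_delete_edge_of_not_isBridge
  rw [SimpleGraph.isBridge_iff, not_not]
  exact this.2

lemma main_ineq (hG : IsCactus G)
    (n k m : ℕ) (hn : Fintype.card V = n) (hm : G.edgeFinset.card = m)
    (hkm : m = n - 1 + k) (h15 : 15 < m)
    (x y : V) (hxy : G.Adj x y) (hcut : ¬ (G.deleteEdges {s(x, y)}).Connected)
    (hdx : 2 ≤ G.degree x) (hdy : 2 ≤ G.degree y) :
    (2 * (m : ℚ) ^ 2 - m) / 4 + k * (6 * (m : ℚ) - 15) + m - 2 ≤ szRevE G ∧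
    (szRevE G = (2 * (m : ℚ) ^ 2 - m) / 4 + k * (6 * (m : ℚ) - 15) + m - 2 →
      (cycs G).card = k ∧
      (∀ C, IsCyc G C → ∑ e ∈ C, (gw G m e - (2 * m - 1) / 4) = 6 * (m : ℚ) - 15) ∧
      (∀ e ∈ G.edgeFinset, (∀ C, IsCyc G C → e ∉ C) → e ≠ s(x, y) →
        gw G m e - (2 * m - 1) / 4 = 0) ∧
      gw G m s(x, y) - (2 * m - 1) / 4 = (m : ℚ) - 2) := by
  have hc := hG.1
  have hm' : (15 : ℚ) < m := by exact_mod_cast h15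
  have hmemC : ∀ C, C ∈ cycs G ↔ IsCyc G C := by intro C; simp [cycs]
  have hkc : k ≤ (cycs G).card := by
    have h1 := edges_le hG
    have : 0 < Fintype.card V := Fintype.card_pos_iff.2 hc.nonempty
    omega
  have hkc' : (k : ℚ) ≤ (cycs G).card := by exact_mod_cast hkc
  set w : Sym2 V → ℚ := fun e => gw G m e - (2 * m - 1) / 4 with hw
  have hsz : szRevE G = (2 * (m : ℚ) ^ 2 - m) / 4 + ∑ e ∈ G.edgeFinset, w e := by
    rw [szRevE_eq G hc, hw, Finset.sum_sub_distrib, Finset.sum_const, hm, nsmul_eq_mul]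
    ring
  set U : Finset (Sym2 V) := (cycs G).biUnion id with hU
  have hUsub : U ⊆ G.edgeFinset := by
    rw [hU, Finset.biUnion_subset]
    intro C hC
    exact cyc_sub ((hmemC C).1 hC)
  have hxyN : s(x, y) ∈ G.edgeFinset \ U := by
    rw [Finset.mem_sdiff]
    refine ⟨by simpa using hxy, fun h => ?_⟩
    rw [hU, Finset.mem_biUnion] at h
    obtain ⟨C, hC, h⟩ := h
    exact xy_not_cyc hc hcut ((hmemC C).1 hC) h
  have hsplit : ∑ e ∈ G.edgeFinset, w e = w s(x, y) +
      ∑ e ∈ (G.edgeFinset \ U).erase s(x, y), w e + ∑ C ∈ cycs G, ∑ e ∈ C, w e := by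
    rw [← Finset.sum_sdiff hUsub, ← Finset.add_sum_erase _ _ hxyN, hU,
      Finset.sum_biUnion (cyc_disj hG)]
    rfl
  have hC6 : ∀ C ∈ cycs G, 6 * (m : ℚ) - 15 ≤ ∑ e ∈ C, w e := by
    intro C hC
    obtain ⟨s, c, h⟩ := exists_cycP hG ((hmemC C).1 hC)
    exact (h.excess hc hm h15).1
  have hCs := Finset.sum_le_sum hC6
  rw [Finset.sum_const, nsmul_eq_mul] at hCs
  have hN0 : ∀ e ∈ (G.edgeFinset \ U).erase s(x, y), 0 ≤ w e := by
    intro e he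
    exact gw_ge hc hm h15 (Finset.mem_sdiff.1 (Finset.mem_of_mem_erase he)).1
  have hNs := Finset.sum_nonneg hN0
  have hx2 : (m : ℚ) - 2 ≤ w s(x, y) := xy_ge hc hm h15 hxy hdx hdy
  have hk6 : (k : ℚ) * (6 * (m : ℚ) - 15) ≤ (cycs G).card * (6 * (m : ℚ) - 15) :=
    mul_le_mul_of_nonneg_right hkc' (by linarith)
  refine ⟨by rw [hsz, hsplit]; linarith, fun heq => ?_⟩
  rw [hsz, hsplit] at heq
  refine ⟨?_, ?_, ?_, by change w s(x, y) = _; linarith⟩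
  · have h1 : (k : ℚ) * (6 * (m : ℚ) - 15) = (cycs G).card * (6 * (m : ℚ) - 15) := by linarith
    have h2 := mul_right_cancel₀ (by linarith) h1
    exact_mod_cast h2.symm
  · intro C hC
    have h1 : ∑ C ∈ cycs G, (6 * (m : ℚ) - 15) = ∑ C ∈ cycs G, ∑ e ∈ C, w e := by
      rw [Finset.sum_const, nsmul_eq_mul]; linarith
    exact ((Finset.sum_eq_sum_iff_of_le hC6).1 h1 C ((hmemC C).2 hC)).symm
  · intro e he hnc hne
    have h1 : ∑ e ∈ (G.edgeFinset \ U).erase s(x, y), w e = 0 := by linarith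
    refine (Finset.sum_eq_zero_iff_of_nonneg hN0).1 h1 e ?_
    rw [Finset.mem_erase, Finset.mem_sdiff]
    refine ⟨hne, he, fun h => ?_⟩
    rw [hU, Finset.mem_biUnion] at h
    obtain ⟨C, hC, h⟩ := h
    exact hnc C ((hmemC C).1 hC) h

end partD

section partE
variable {V : Type*} [Fintype V] {G : SimpleGraph V}

lemma CycP.rot {C : Finset (Sym2 V)} {s : ℕ} {c : ZMod (s + 3) → V} (h : CycP G C s c)
    (d : ZMod (s + 3)) : CycP G C s (fun i => c (i + d)) where
  inj := fun i j hij => add_right_cancel (h.inj hij)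
  adj := fun i => by
    have := h.adj (i + d)
    rwa [add_right_comm] at this
  mem := fun e => by
    rw [h.mem]
    constructor
    · rintro ⟨i, rfl⟩
      exact ⟨i - d, by
        have e1 : i - d + d = i := by ring
        have e2 : i - d + 1 + d = i + 1 := by ring
        simp only [e1, e2]⟩
    · rintro ⟨i, rfl⟩
      exact ⟨i + d, by rw [add_right_comm]⟩
  sep := fun i j hr => add_right_cancel (h.sep _ _ hr)

/-- a vertex on a cycle has two distinct neighbours on the cycle -/
lemma CycP.two {C : Finset (Sym2 V)} {s : ℕ} {c : ZMod (s + 3) → V} (h : CycP G C s c)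
    {w u : V} (he : s(w, u) ∈ C) :
    ∃ a b, a ≠ b ∧ G.Adj w a ∧ G.Adj w b ∧ s(w, a) ∈ C ∧ s(w, b) ∈ C := by
  have key : ∀ i, ∃ a b, a ≠ b ∧ G.Adj (c i) a ∧ G.Adj (c i) b ∧ s(c i, a) ∈ C ∧ s(c i, b) ∈ C := by
    intro i
    have e1 : i - 1 + 1 = i := by ring
    refine ⟨c (i + 1), c (i - 1), ?_, h.adj i, ?_, (h.mem _).2 ⟨i, rfl⟩, ?_⟩
    · intro h1
      have h2 := h.inj h1
      apply one_add_one_ne_zmod s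
      linear_combination h2
    · have := h.adj (i - 1)
      rw [e1] at this
      exact this.symm
    · refine (h.mem _).2 ⟨i - 1, ?_⟩
      rw [e1, Sym2.eq_swap]
  obtain ⟨i, hi⟩ := (h.mem _).1 he
  rcases Sym2.eq_iff.1 hi with ⟨h1, _⟩ | ⟨h1, _⟩
  · rw [h1]; exact key _
  · rw [h1]; exact key _

lemma quad_struct (hc : G.Connected) {C : Finset (Sym2 V)} {c : ZMod (1 + 3) → V}
    (h : CycP G C 1 c) {m : ℕ} (hm : G.edgeFinset.card = m)
    (hsq : ∀ i, (totD G (c i) - totD G (c (i + 1))) ^ 2 = ((m : ℤ) - 4) ^ 2)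
    {y : V} (hxy : G.Adj (c 0) y) (hxyC : s(c 0, y) ∉ C) (i : ZMod (1 + 3)) (hi : i ≠ 0)
    (w : V) (hw : G.Adj (c i) w) : s(c i, w) ∈ C := by
  have hsame : ∀ i, (∀ f ∈ G.edgeFinset \ C, (eDist G f (c i) : ℤ) - eDist G f (c (i + 1)) = 1) ∨
      (∀ f ∈ G.edgeFinset \ C, (eDist G f (c i) : ℤ) - eDist G f (c (i + 1)) = -1) := by
    intro i
    apply all_same _ _ (fun f _ => eDist_abs hc (h.adj i) f)
    rw [h.card_sdiff, ← h.diff hc, hsq, hm]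
    push_cast
    ring
  have hxyN : s(c 0, y) ∈ G.edgeFinset \ C := by
    rw [Finset.mem_sdiff]; exact ⟨by simpa using hxy, hxyC⟩
  have e01 : s(c 0, c 1) ∈ C := (h.mem _).2 ⟨0, by rw [zero_add]⟩
  have t30 : (3 + 1 : ZMod (1 + 3)) = 0 := by decide
  have e30 : s(c 3, c 0) ∈ C := (h.mem _).2 ⟨3, by rw [t30]⟩
  have a01 : G.Adj (c 0) (c 1) := by have := h.adj 0; rwa [zero_add] at this
  have a30 : G.Adj (c 3) (c 0) := by have := h.adj 3; rwa [t30] at this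
  have a12 : G.Adj (c 1) (c 2) := h.adj 1
  have h0 : ∀ f ∈ G.edgeFinset \ C, (eDist G f (c 0) : ℤ) - eDist G f (c 1) = -1 := by
    have := hsame 0
    rw [zero_add] at this
    rcases this with h1 | h1
    · exfalso
      have := h1 _ hxyN
      obtain ⟨h2, h3⟩ := eDist_one hc (a := y) a01 (fun h => hxyC (h ▸ e01))
      rw [h2, h3] at this
      norm_num at this
    · exact h1
  have h3 : ∀ f ∈ G.edgeFinset \ C, (eDist G f (c 3) : ℤ) - eDist G f (c 0) = 1 := by
    have := hsame 3
    rw [t30] at this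
    rcases this with h1 | h1
    · exact h1
    · exfalso
      have := h1 _ hxyN
      obtain ⟨h2, h3⟩ := eDist_one hc (a := y) a30.symm
        (fun h => hxyC (by rw [← h, Sym2.eq_swap]; exact e30))
      rw [h2, h3] at this
      norm_num at this
  by_contra hnm
  have hN : s(c i, w) ∈ G.edgeFinset \ C := by
    rw [Finset.mem_sdiff]; exact ⟨by simpa using hw, hnm⟩
  have hcases : ∀ i : ZMod (1 + 3), i ≠ 0 → i = 1 ∨ i = 2 ∨ i = 3 := by decide
  rcases hcases i hi with rfl | rfl | rfl
  · have := h0 _ hN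
    obtain ⟨h2, h3⟩ := eDist_one hc (a := w) a01.symm
      (fun h => hnm (by rw [← h, Sym2.eq_swap]; exact e01))
    rw [h2, h3] at this
    norm_num at this
  · have h4 := h0 _ hN
    have h5 := eDist_lip G hc a12 s(c 2, w)
    have h6 : eDist G s(c 2, w) (c 2) = 0 := by rw [eDist_zero_iff G hc]; simp
    have h7 : eDist G s(c 2, w) (c 0) = 0 := by omega
    rw [eDist_eq_zero G hc] at h7
    rcases h7 with h7 | h7
    · exact absurd (h.inj h7) (by decide)
    · have : (G.deleteEdges (C : Set (Sym2 V))).Adj (c 2) (c 0) := by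
        rw [SimpleGraph.deleteEdges_adj, h7]
        exact ⟨hw, hnm⟩
      exact absurd (h.sep _ _ this.reachable) (by decide)
  · have := h3 _ hN
    obtain ⟨h2, h3⟩ := eDist_one hc (a := w) a30 (fun h => hnm (by rw [← h]; exact e30))
    rw [h2, h3] at this
    norm_num at this

/-- the relation generating `GStar1` with `l` pendant edges. -/
def gsRel (k l : ℕ) :
    (Unit ⊕ ((Σ _ : Fin k, Fin 3) ⊕ (Fin l ⊕ Fin 2))) →
    (Unit ⊕ ((Σ _ : Fin k, Fin 3) ⊕ (Fin l ⊕ Fin 2))) → Prop := fun x y =>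
    match x, y with
    | Sum.inl _, Sum.inr (Sum.inr (Sum.inl _)) => True
    | Sum.inl _, Sum.inr (Sum.inr (Sum.inr b)) => b.val = 0
    | Sum.inr (Sum.inr (Sum.inr a)), Sum.inr (Sum.inr (Sum.inr b)) => a.val = 0 ∧ b.val = 1
    | Sum.inl _, Sum.inr (Sum.inl ⟨_, a⟩) => a.val = 0 ∨ a.val = 2
    | Sum.inr (Sum.inl ⟨i, a⟩), Sum.inr (Sum.inl ⟨j, b⟩) => i = j ∧ a.val + 1 = b.val
    | _, _ => False

lemma GStar1_adj (n k : ℕ) (a b) : (GStar1 n k).Adj a b ↔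
    a ≠ b ∧ (gsRel k (n - 3 * k - 3) a b ∨ gsRel k (n - 3 * k - 3) b a) := by
  unfold GStar1
  rw [SimpleGraph.fromRel_adj]
  rcases a with _ | ⟨_, _⟩ | _ | _ <;> rcases b with _ | ⟨_, _⟩ | _ | _ <;> rfl

/-- leaves at `x` -/
def leafAt (G : SimpleGraph V) (x l : V) : Prop := G.Adj x l ∧ ∀ u, G.Adj l u → u = x

/-- quadrangle through `x` -/
def quadAt (G : SimpleGraph V) (x : V) (C : Finset (Sym2 V)) (c : ZMod (1 + 3) → V) : Prop :=
  IsCyc G C ∧ CycP G C 1 c ∧ c 0 = x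

/-- good edges -/
def goodE (G : SimpleGraph V) (x y z : V) (e : Sym2 V) : Prop :=
  e = s(x, y) ∨ e = s(y, z) ∨ (∃ l, leafAt G x l ∧ e = s(x, l)) ∨ ∃ C c, quadAt G x C c ∧ e ∈ C

lemma struct1 (hG : IsCactus G) {m : ℕ} (hm : G.edgeFinset.card = m) {x y z : V}
    (hxy : G.Adj x y) (hdx : 2 ≤ G.degree x)
    (hxyN : ∀ C, IsCyc G C → s(x, y) ∉ C)
    (hcyc : ∀ C, IsCyc G C → ∃ c : ZMod (1 + 3) → V, CycP G C 1 c ∧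
      ∀ i, (totD G (c i) - totD G (c (i + 1))) ^ 2 = ((m : ℤ) - 4) ^ 2)
    (hnc : ∀ u v, G.Adj u v → (∀ C, IsCyc G C → s(u, v) ∉ C) → s(u, v) ≠ s(x, y) →
      (∀ w, G.Adj u w → w = v) ∨ (∀ w, G.Adj v w → w = u))
    (hzx : z ≠ x) (hyz : G.Adj y z) (hy : ∀ w, G.Adj y w → w = x ∨ w = z) :
    (∀ C, IsCyc G C → ∀ w, s(y, w) ∉ C) ∧ (∀ w, G.Adj z w → w = y) ∧
    (∀ C c, quadAt G x C c → ∀ i, i ≠ 0 → ∀ w, G.Adj (c i) w → s(c i, w) ∈ C) ∧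
    (∀ w, w = x ∨ ∃ e, goodE G x y z e ∧ w ∈ e) ∧
    (∀ u v, G.Adj u v → goodE G x y z s(u, v)) := by
  have hc := hG.1
  have hyC : ∀ C, IsCyc G C → ∀ w, s(y, w) ∉ C := by
    intro C hC w hw
    obtain ⟨c, h, _⟩ := hcyc C hC
    obtain ⟨a, b, hab, ha, hb, haC, hbC⟩ := h.two hw
    rcases hy a ha with rfl | rfl
    · exact hxyN C hC (by rw [Sym2.eq_swap]; exact haC)
    · rcases hy b hb with rfl | rfl
      · exact hxyN C hC (by rw [Sym2.eq_swap]; exact hbC)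
      · exact hab rfl
  have hz : ∀ w, G.Adj z w → w = y := by
    rcases hnc y z hyz (fun C hC => hyC C hC z) (by
      intro h5
      rcases Sym2.eq_iff.1 h5 with h6 | h6
      · exact hxy.ne h6.1.symm
      · exact hzx h6.2) with h1 | h1
    · exact absurd (h1 x hxy.symm) hzx.symm
    · exact h1
  have hquad : ∀ C c, quadAt G x C c → ∀ i, i ≠ 0 → ∀ w, G.Adj (c i) w → s(c i, w) ∈ C := by
    intro C c ⟨hC, h, h0⟩ i hi w hw
    obtain ⟨c', h', hsq'⟩ := hcyc C hC
    have hsq : ∀ i, (totD G (c i) - totD G (c (i + 1))) ^ 2 = ((m : ℤ) - 4) ^ 2 := by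
      intro i
      have hmem : s(c i, c (i + 1)) ∈ C := (h.mem _).2 ⟨i, rfl⟩
      obtain ⟨j, hj⟩ := (h'.mem _).1 hmem
      rcases Sym2.eq_iff.1 hj with ⟨h1, h2⟩ | ⟨h1, h2⟩
      · rw [h1, h2]; exact hsq' j
      · rw [h1, h2, ← hsq' j]; ring
    exact quad_struct hc h hm hsq (y := y) (by rw [h0]; exact hxy)
      (by rw [h0]; exact hxyN C hC) i hi w hw
  have hstep : ∀ w, (w = x ∨ ∃ e, goodE G x y z e ∧ w ∈ e) → ∀ u, G.Adj w u →
      goodE G x y z s(w, u) := by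
    have hx : ∀ u, G.Adj x u → goodE G x y z s(x, u) := by
      intro u hu
      by_cases hex : ∃ C, IsCyc G C ∧ s(x, u) ∈ C
      · obtain ⟨C, hC, hmem⟩ := hex
        obtain ⟨c, h, _⟩ := hcyc C hC
        right; right; right
        have : ∃ i, c i = x := by
          obtain ⟨i, hi⟩ := (h.mem _).1 hmem
          rcases Sym2.eq_iff.1 hi with ⟨h1, _⟩ | ⟨h1, _⟩
          · exact ⟨_, h1.symm⟩
          · exact ⟨_, h1.symm⟩
        obtain ⟨i, hi⟩ := this
        exact ⟨C, _, ⟨hC, h.rot i, by simpa using hi⟩, hmem⟩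
      · push Not at hex
        by_cases hne : s(x, u) = s(x, y)
        · left; exact hne
        · rcases hnc x u hu hex hne with h1 | h1
          · exfalso
            obtain ⟨a, ha, hau⟩ := exists_other (y := u) hdx
            exact hau (h1 a ha)
          · right; right; left
            exact ⟨u, ⟨hu, h1⟩, rfl⟩
    have hyy : ∀ u, G.Adj y u → goodE G x y z s(y, u) := by
      intro u hu
      rcases hy u hu with rfl | rfl
      · left; rw [Sym2.eq_swap]
      · right; left; rfl
    rintro w (rfl | ⟨e, he, hwe⟩) u hu
    · exact hx u hu
    · rcases he with rfl | rfl | ⟨l, hl, rfl⟩ | ⟨C, c, hq, heC⟩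
      · rcases Sym2.mem_iff.1 hwe with rfl | rfl
        · exact hx u hu
        · exact hyy u hu
      · rcases Sym2.mem_iff.1 hwe with rfl | rfl
        · exact hyy u hu
        · right; left; rw [hz u hu, Sym2.eq_swap]
      · rcases Sym2.mem_iff.1 hwe with rfl | rfl
        · exact hx u hu
        · right; right; left
          exact ⟨w, hl, by rw [hl.2 u hu, Sym2.eq_swap]⟩
      · have : ∃ i, c i = w := by
          obtain ⟨i, rfl⟩ := (hq.2.1.mem _).1 heC
          rcases Sym2.mem_iff.1 hwe with h1 | h1
          · exact ⟨_, h1.symm⟩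
          · exact ⟨_, h1.symm⟩
        obtain ⟨i, rfl⟩ := this
        by_cases hi : i = 0
        · subst hi
          have h0 := hq.2.2
          rw [h0] at hu ⊢
          exact hx u hu
        · right; right; right
          exact ⟨C, c, hq, hquad C c hq i hi u hu⟩
  have hall : ∀ w, w = x ∨ ∃ e, goodE G x y z e ∧ w ∈ e := by
    have aux : ∀ a b (_ : G.Walk a b), b = x → (a = x ∨ ∃ e, goodE G x y z e ∧ a ∈ e) := by
      intro a b p
      induction p with
      | nil => intro h; exact Or.inl h
      | cons hadj p ih =>
        intro h
        right
        exact ⟨_, hstep _ (ih h) _ hadj.symm, by simp⟩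
    intro w
    obtain ⟨p⟩ := hc.preconnected w x
    exact aux w x p rfl
  exact ⟨hyC, hz, hquad, hall, fun u v huv => hstep u (hall u) v huv⟩

end partE

section partF
variable {V : Type*} [Fintype V] {G : SimpleGraph V}

/-- the model parametrization -/
def psi {k l : ℕ} (x y z : V) (Q : Fin k → ZMod (1 + 3) → V) (L : Fin l → V) :
    (Unit ⊕ ((Σ _ : Fin k, Fin 3) ⊕ (Fin l ⊕ Fin 2))) → V
  | Sum.inl _ => x
  | Sum.inr (Sum.inl p) => Q p.1 ((p.2.val + 1 : ℕ) : ZMod (1 + 3))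
  | Sum.inr (Sum.inr (Sum.inl j)) => L j
  | Sum.inr (Sum.inr (Sum.inr b)) => if b.val = 0 then y else z

lemma fin3_ne : ∀ a : Fin 3, ((a.val + 1 : ℕ) : ZMod (1 + 3)) ≠ 0 := by decide
lemma fin3_inj : ∀ a b : Fin 3, ((a.val + 1 : ℕ) : ZMod (1 + 3)) = ((b.val + 1 : ℕ) : ZMod (1 + 3)) →
    a = b := by decide
lemma fin3_surj : ∀ i : ZMod (1 + 3), i = 0 ∨ ∃ a : Fin 3, i = ((a.val + 1 : ℕ) : ZMod (1 + 3)) := by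
  decide

lemma F1 (hG : IsCactus G) {x y z : V} (hxy : G.Adj x y)
    (hzx : z ≠ x) (hyz : G.Adj y z)
    (hyC : ∀ C, IsCyc G C → ∀ w, s(y, w) ∉ C) (hz : ∀ w, G.Adj z w → w = y)
    (hquad : ∀ C c, quadAt G x C c → ∀ i, i ≠ 0 → ∀ w, G.Adj (c i) w → s(c i, w) ∈ C)
    (hall : ∀ w, w = x ∨ ∃ e, goodE G x y z e ∧ w ∈ e)
    (hgood : ∀ u v, G.Adj u v → goodE G x y z s(u, v)) {k l : ℕ}
    (CC : Fin k → Finset (Sym2 V)) (hinj : Function.Injective CC)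
    (Q : Fin k → ZMod (1 + 3) → V) (hQ : ∀ i, quadAt G x (CC i) (Q i))
    (hCC : ∀ C, IsCyc G C → ∃ i, CC i = C)
    (L : Fin l → V) (hLi : Function.Injective L) (hL : ∀ w, leafAt G x w ↔ ∃ j, L j = w) :
    Function.Bijective (psi x y z Q L) ∧
    ∀ a b, G.Adj (psi x y z Q L a) (psi x y z Q L b) ↔ gsRel k l a b ∨ gsRel k l b a := by
  have hQm : ∀ i j, s(Q i j, Q i (j + 1)) ∈ CC i := fun i j => ((hQ i).2.1.mem _).2 ⟨j, rfl⟩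
  have qx : ∀ i j, j ≠ 0 → Q i j ≠ x := by
    intro i j hj h
    rw [← (hQ i).2.2] at h
    exact hj ((hQ i).2.1.inj h)
  have qy : ∀ i j, Q i j ≠ y := by
    intro i j h
    have := hQm i j
    rw [h] at this
    exact hyC _ (hQ i).1 _ this
  have q1 : ∀ i j u, ¬ (∀ w, G.Adj (Q i j) w → w = u) := by
    intro i j u h
    obtain ⟨a, b, hab, ha, hb, _⟩ := (hQ i).2.1.two (hQm i j)
    exact hab ((h a ha).trans (h b hb).symm)
  have qz : ∀ i j, Q i j ≠ z := fun i j h => q1 i j y (by rw [h]; exact hz)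
  have ql : ∀ i j w, leafAt G x w → Q i j ≠ w := fun i j w hw h => q1 i j x (by rw [h]; exact hw.2)
  have qq : ∀ i j i' j', j' ≠ 0 → Q i j = Q i' j' → i = i' ∧ j = j' := by
    intro i j i' j' hj' h
    have h1 := hQm i j
    have h2 : s(Q i j, Q i (j + 1)) ∈ CC i' := by
      rw [h]
      refine hquad _ _ (hQ i') j' hj' _ ?_
      rw [← h]
      exact (hQ i).2.1.adj j
    have h3 := hinj (cyc_eq hG (hQ i).1 (hQ i').1 h1 h2)
    subst h3
    exact ⟨rfl, (hQ i).2.1.inj h⟩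
  have lx : ∀ w, leafAt G x w → w ≠ x := fun w hw => hw.1.ne'
  have ly : ∀ w, leafAt G x w → w ≠ y := by
    intro w hw h
    subst h
    exact hzx (hw.2 _ hyz)
  have lz : ∀ w, leafAt G x w → w ≠ z := by
    intro w hw h
    subst h
    exact hxy.ne (hz _ hw.1.symm)
  have hLj : ∀ j, leafAt G x (L j) := fun j => (hL _).2 ⟨j, rfl⟩
  have hb0 : ∀ b : Fin 2, (if b.val = 0 then y else z) = y ∨ (if b.val = 0 then y else z) = z := by
    intro b; by_cases h : b.val = 0 <;> simp [h]
  have bx : ∀ b : Fin 2, (if b.val = 0 then y else z) ≠ x := by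
    intro b
    rcases hb0 b with h | h <;> rw [h]
    · exact hxy.ne'
    · exact hzx
  have bq : ∀ i j (b : Fin 2), Q i j ≠ (if b.val = 0 then y else z) := by
    intro i j b
    rcases hb0 b with h | h <;> rw [h]
    · exact qy _ _
    · exact qz _ _
  have bl : ∀ j (b : Fin 2), L j ≠ (if b.val = 0 then y else z) := by
    intro j b
    rcases hb0 b with h | h <;> rw [h]
    · exact ly _ (hLj j)
    · exact lz _ (hLj j)
  have bb : ∀ a b : Fin 2, (if a.val = 0 then y else z) = (if b.val = 0 then y else z) → a = b := by
    have := hyz.ne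
    have := hyz.ne'
    intro a b
    fin_cases a <;> fin_cases b <;> simp_all
  have hI : Function.Injective (psi x y z Q L) := by
    rintro (_ | ⟨i, a⟩ | j | b) (_ | ⟨i', a'⟩ | j' | b') h <;> simp only [psi] at h
    · rfl
    · exact absurd h.symm (qx _ _ (fin3_ne _))
    · exact absurd h.symm (lx _ (hLj _))
    · exact absurd h.symm (bx _)
    · exact absurd h (qx _ _ (fin3_ne _))
    · obtain ⟨h1, h2⟩ := qq _ _ _ _ (fin3_ne _) h
      subst h1
      rw [fin3_inj _ _ h2]
    · exact absurd h (ql _ _ _ (hLj _))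
    · exact absurd h (bq _ _ _)
    · exact absurd h (lx _ (hLj _))
    · exact absurd h.symm (ql _ _ _ (hLj _))
    · rw [hLi h]
    · exact absurd h (bl _ _)
    · exact absurd h (bx _)
    · exact absurd h.symm (bq _ _ _)
    · exact absurd h.symm (bl _ _)
    · rw [bb _ _ h]
  have hex : ∀ e, goodE G x y z e → ∃ a b, gsRel k l a b ∧ e = s(psi x y z Q L a, psi x y z Q L b) := by
    rintro e (rfl | rfl | ⟨w, hw, rfl⟩ | ⟨C, c, hq, heC⟩)
    · exact ⟨Sum.inl (), Sum.inr (Sum.inr (Sum.inr 0)), by simp [gsRel], by simp [psi]⟩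
    · exact ⟨Sum.inr (Sum.inr (Sum.inr 0)), Sum.inr (Sum.inr (Sum.inr 1)), by simp [gsRel],
        by simp [psi]⟩
    · obtain ⟨j, rfl⟩ := (hL w).1 hw
      exact ⟨Sum.inl (), Sum.inr (Sum.inr (Sum.inl j)), by simp [gsRel], by simp [psi]⟩
    · obtain ⟨i, rfl⟩ := hCC C hq.1
      obtain ⟨j, rfl⟩ := ((hQ i).2.1.mem _).1 heC
      have hj : ∀ j : ZMod (1 + 3), j = 0 ∨ j = 1 ∨ j = 2 ∨ j = 3 := by decide
      have h0 := (hQ i).2.2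
      rcases hj j with rfl | rfl | rfl | rfl
      · exact ⟨Sum.inl (), Sum.inr (Sum.inl ⟨i, 0⟩), by simp [gsRel], by simp [psi, h0]⟩
      · exact ⟨Sum.inr (Sum.inl ⟨i, 0⟩), Sum.inr (Sum.inl ⟨i, 1⟩), by simp [gsRel], by
          simp [psi]; left; rfl⟩
      · refine ⟨Sum.inr (Sum.inl ⟨i, 1⟩), Sum.inr (Sum.inl ⟨i, 2⟩), by simp [gsRel], ?_⟩
        have e1 : (2 + 1 : ZMod (1 + 3)) = (((2 : Fin 3).val + 1 : ℕ) : ZMod (1 + 3)) := by decide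
        have e2 : (2 : ZMod (1 + 3)) = (((1 : Fin 3).val + 1 : ℕ) : ZMod (1 + 3)) := by decide
        simp only [psi]
        rw [e1, ← e2]
      · refine ⟨Sum.inl (), Sum.inr (Sum.inl ⟨i, 2⟩), by simp [gsRel], ?_⟩
        have e1 : (3 + 1 : ZMod (1 + 3)) = 0 := by decide
        have e2 : (3 : ZMod (1 + 3)) = (((2 : Fin 3).val + 1 : ℕ) : ZMod (1 + 3)) := by decide
        simp only [psi]
        rw [e1, h0, ← e2, Sym2.eq_swap]
  have hS : Function.Surjective (psi x y z Q L) := by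
    intro w
    rcases hall w with rfl | ⟨e, he, hw⟩
    · exact ⟨Sum.inl (), rfl⟩
    · obtain ⟨a, b, _, rfl⟩ := hex e he
      rcases Sym2.mem_iff.1 hw with h | h
      · exact ⟨_, h.symm⟩
      · exact ⟨_, h.symm⟩
  have hR : ∀ a b, gsRel k l a b → G.Adj (psi x y z Q L a) (psi x y z Q L b) := by
    rintro (_ | ⟨i, a⟩ | j | b) (_ | ⟨i', a'⟩ | j' | b') h <;> simp only [gsRel] at h <;>
      simp only [psi]
    · have h0 := (hQ i').2.2
      have ha' : a' = 0 ∨ a' = 2 := by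
        rcases h with h | h
        · left; exact Fin.ext h
        · right; exact Fin.ext h
      rcases ha' with rfl | rfl
      · have := (hQ i').2.1.adj 0
        rw [h0, zero_add] at this
        simpa using this
      · have := (hQ i').2.1.adj 3
        have e1 : (3 + 1 : ZMod (1 + 3)) = 0 := by decide
        have e2 : (3 : ZMod (1 + 3)) = (((2 : Fin 3).val + 1 : ℕ) : ZMod (1 + 3)) := by decide
        rw [e1, h0] at this
        rw [← e2]
        exact this.symm
    · exact (hLj _).1
    · simp [h, hxy]
    · obtain ⟨rfl, h⟩ := h
      have := (hQ i).2.1.adj ((a.val + 1 : ℕ) : ZMod (1 + 3))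
      rw [← h]
      push_cast at this ⊢
      exact this
    · simp [h.1, h.2, hyz]
  refine ⟨⟨hI, hS⟩, fun a b => ⟨fun h => ?_, ?_⟩⟩
  · obtain ⟨a', b', hr, he⟩ := hex _ (hgood _ _ h)
    rcases Sym2.eq_iff.1 he with ⟨h1, h2⟩ | ⟨h1, h2⟩
    · left; rw [hI h1, hI h2]; exact hr
    · right; rw [hI h1, hI h2]; exact hr
  · rintro (h | h)
    · exact hR _ _ h
    · exact (hR _ _ h).symm

lemma gsRel_irrefl {k l : ℕ} (a) : ¬ gsRel k l a a := by
  rcases a with _ | ⟨i, a⟩ | j | b <;> simp [gsRel]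
  omega

lemma F1' (hG : IsCactus G) {x y z : V} (hxy : G.Adj x y)
    (hzx : z ≠ x) (hyz : G.Adj y z)
    (hcyc : ∀ C, IsCyc G C → ∃ c : ZMod (1 + 3) → V, CycP G C 1 c)
    (hyC : ∀ C, IsCyc G C → ∀ w, s(y, w) ∉ C) (hz : ∀ w, G.Adj z w → w = y)
    (hquad : ∀ C c, quadAt G x C c → ∀ i, i ≠ 0 → ∀ w, G.Adj (c i) w → s(c i, w) ∈ C)
    (hall : ∀ w, w = x ∨ ∃ e, goodE G x y z e ∧ w ∈ e)
    (hgood : ∀ u v, G.Adj u v → goodE G x y z s(u, v)) {n k : ℕ}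
    (hn : Fintype.card V = n) (hk : (cycs G).card = k) : Nonempty (G ≃g GStar1 n k) := by
  have hqa : ∀ C, IsCyc G C → ∃ c, quadAt G x C c := by
    intro C hC
    obtain ⟨c, hc⟩ := hcyc C hC
    have hm : s(c 0, c (0 + 1)) ∈ C := (hc.mem _).2 ⟨0, rfl⟩
    rcases hgood _ _ (hc.adj 0) with h | h | ⟨w, hw, h⟩ | ⟨C', c', hq, h⟩
    · rw [h, Sym2.eq_swap] at hm
      exact absurd hm (hyC _ hC _)
    · rw [h] at hm
      exact absurd hm (hyC _ hC _)
    · rw [h, Sym2.eq_swap] at hm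
      obtain ⟨a, b, hab, ha, hb, _⟩ := hc.two hm
      exact absurd ((hw.2 a ha).trans (hw.2 b hb).symm) hab
    · have := cyc_eq hG hC hq.1 hm h
      subst this
      exact ⟨c', hq⟩
  have : Nonempty V := ⟨x⟩
  choose! cc hcc using hqa
  have hmem : ∀ C, C ∈ cycs G ↔ IsCyc G C := by intro C; simp [cycs]
  let eC : Fin k ≃ {C // C ∈ cycs G} := ((cycs G).equivFinOfCardEq hk).symm
  let Ls : Finset V := univ.filter (leafAt G x)
  obtain ⟨l, hl⟩ : ∃ l, Ls.card = l := ⟨_, rfl⟩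
  let eL : Fin l ≃ {w // w ∈ Ls} := (Ls.equivFinOfCardEq hl).symm
  obtain ⟨hb, hadj⟩ := F1 (k := k) (l := l) hG hxy hzx hyz hyC hz hquad hall hgood
    (fun i => (eC i).1) (fun i j h => eC.injective (Subtype.ext h))
    (fun i => cc (eC i).1) (fun i => hcc _ ((hmem _).1 (eC i).2))
    (fun C hC => ⟨eC.symm ⟨C, (hmem C).2 hC⟩, by simp⟩)
    (fun j => (eL j).1) (fun i j h => eL.injective (Subtype.ext h))
    (fun w => ⟨fun hw => ⟨eL.symm ⟨w, by simpa [Ls] using hw⟩, by simp⟩, by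
      rintro ⟨j, rfl⟩
      have := (eL j).2
      exact (Finset.mem_filter.1 this).2⟩)
  have hcard := Fintype.card_congr (Equiv.ofBijective _ hb)
  simp at hcard
  have hl' : l = n - 3 * k - 3 := by omega
  clear_value eL
  subst hl'
  refine ⟨(RelIso.symm ⟨Equiv.ofBijective _ hb, ?_⟩ : G ≃g GStar1 n k)⟩
  intro a b
  rw [GStar1_adj, Equiv.ofBijective_apply, Equiv.ofBijective_apply, hadj]
  constructor
  · intro h
    refine ⟨?_, h⟩
    rintro rfl
    exact gsRel_irrefl a (or_self_iff.1 h)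
  · exact fun h => h.2

end partF

section partH
variable {V : Type*} [Fintype V] {G : SimpleGraph V}

lemma sep_dist (hc : G.Connected) {S : Set V} {h : V}
    (hS : ∀ s ∈ S, ∀ w, G.Adj s w → w ∈ S ∨ w = h) {w s : V} (hw : w ∉ S) (hs : s ∈ S) :
    G.dist w s = G.dist w h + G.dist h s := by
  apply le_antisymm
  · exact hc.dist_triangle
  · have aux : ∀ a b (p : G.Walk a b), a ∈ S → b ∉ S → G.dist b h + G.dist h a ≤ p.length := by
      intro a b p
      induction p with
      | nil => intro h1 h2; exact absurd h1 h2
      | cons hadj p ih =>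
        intro h1 h2
        rename_i a b d
        rw [SimpleGraph.Walk.length_cons]
        rcases hS a h1 b hadj with h3 | h3
        · have h4 := ih h3 h2
          have h5 := dist_lip G hc hadj h
          omega
        · subst h3
          have h4 : G.dist b a = 1 := SimpleGraph.dist_eq_one_iff_adj.2 hadj.symm
          have h5 : G.dist d b ≤ p.length := by
            rw [SimpleGraph.dist_comm]; exact SimpleGraph.dist_le p
          omega
    obtain ⟨p, hp⟩ := hc.exists_walk_length_eq_dist s w
    have := aux _ _ p hs hw
    rw [SimpleGraph.dist_comm (u := w) (v := s), ← hp]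
    exact this

lemma sep_eDist (hc : G.Connected) {S : Set V} {h : V}
    (hS : ∀ s ∈ S, ∀ w, G.Adj s w → w ∈ S ∨ w = h) {f : Sym2 V} {s : V}
    (hf : ∀ w ∈ f, w ∉ S) (hs : s ∈ S) :
    (eDist G f s : ℤ) - eDist G f h = G.dist h s := by
  induction f with
  | _ a b =>
    rw [eDist_mk, eDist_mk, sep_dist hc hS (hf a (by simp)) hs, sep_dist hc hS (hf b (by simp)) hs]
    omega

lemma diff_split {D : Finset (Sym2 V)} (hD : D ⊆ G.edgeFinset) {m d : ℕ}
    (hm : G.edgeFinset.card = m) {u v : V}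
    (h : ∀ f ∈ G.edgeFinset \ D, (eDist G f u : ℤ) - eDist G f v = d) :
    totD G u - totD G v = ((m : ℤ) - D.card) * d + ∑ f ∈ D, ((eDist G f u : ℤ) - eDist G f v) := by
  rw [totD_sub, ← Finset.sum_sdiff hD, Finset.sum_congr rfl h, Finset.sum_const,
    Finset.card_sdiff_of_subset hD, hm, nsmul_eq_mul,
    Nat.cast_sub (by rw [← hm]; exact Finset.card_le_card hD)]

lemma leaf_diff (hc : G.Connected) {m : ℕ} (hm : G.edgeFinset.card = m) {u v : V}
    (huv : G.Adj u v) (h : ∀ w, G.Adj u w → w = v) : totD G u - totD G v = (m : ℤ) - 1 := by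
  have hS : ∀ s ∈ ({u} : Set V), ∀ w, G.Adj s w → w ∈ ({u} : Set V) ∨ w = v := by
    rintro s rfl w hw; right; exact h w hw
  have := diff_split (D := {s(u, v)}) (u := u) (v := v) (d := 1) (by simpa using huv) hm (by
    intro f hf
    rw [sep_eDist hc hS ?_ rfl, SimpleGraph.dist_eq_one_iff_adj.2 huv.symm]
    induction f with
    | _ a b =>
      simp at hf
      intro w hw hwu
      have hwu : w = u := hwu
      subst hwu
      rcases Sym2.mem_iff.1 hw with rfl | rfl
      · exact hf.2.1 rfl (h _ hf.1)
      · exact hf.2.2 (h _ hf.1.symm) rfl)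
  rw [this, Finset.sum_singleton, (eDist_zero_iff G hc _ _).2 (by simp),
    (eDist_zero_iff G hc _ _).2 (by simp)]
  simp

lemma path_diff (hc : G.Connected) {m : ℕ} (hm : G.edgeFinset.card = m) {x y z : V}
    (hxy : G.Adj x y) (hyz : G.Adj y z) (hxz : x ≠ z)
    (hy : ∀ w, G.Adj y w → w = x ∨ w = z)
    (hz : ∀ w, G.Adj z w → w = y) : totD G y - totD G x = (m : ℤ) - 3 := by
  have hS : ∀ s ∈ ({y, z} : Set V), ∀ w, G.Adj s w → w ∈ ({y, z} : Set V) ∨ w = x := by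
    rintro s (rfl | rfl) w hw
    · rcases hy w hw with h | h
      · right; exact h
      · left; right; exact h
    · left; left; exact hz w hw
  have hne : s(x, y) ≠ s(y, z) := by
    intro h
    rcases Sym2.eq_iff.1 h with h | h
    · exact hxy.ne h.1
    · exact hxz h.1
  have := diff_split (D := {s(x, y), s(y, z)}) (u := y) (v := x) (d := 1) (by
      intro e he
      simp at he
      rcases he with rfl | rfl <;> simpa) hm (by
    intro f hf
    rw [sep_eDist hc hS ?_ (by simp), SimpleGraph.dist_eq_one_iff_adj.2 hxy]
    have hf' := Finset.mem_sdiff.1 hf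
    have key : ∀ a b, G.Adj a b → s(a, b) ∉ ({s(x, y), s(y, z)} : Finset (Sym2 V)) →
        a ∉ ({y, z} : Set V) := by
      rintro a b hab hn (rfl | rfl)
      · rcases hy b hab with rfl | rfl
        · apply hn; simp
        · apply hn; simp
      · rw [hz b hab] at hn
        apply hn; simp
    induction f with
    | _ a b =>
      have h1 : G.Adj a b := by simpa using hf'.1
      intro w hw
      rcases Sym2.mem_iff.1 hw with rfl | rfl
      · exact key _ _ h1 hf'.2
      · exact key _ _ h1.symm
          (fun h => hf'.2 (by rw [show s(a, w) = s(w, a) from Sym2.eq_swap]; exact h)))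
  obtain ⟨h1, h2⟩ := eDist_one hc (u := y) (v := x) (a := z) hxy.symm hxz
  rw [this, Finset.sum_pair hne, (eDist_zero_iff G hc s(x, y) _).2 (by simp),
    (eDist_zero_iff G hc s(x, y) _).2 (by simp), h1, h2, Finset.card_pair hne]
  push_cast
  ring

lemma quad_diff (hc : G.Connected) {m : ℕ} (hm : G.edgeFinset.card = m) {x a b d : V}
    (hxa : G.Adj x a) (hab : G.Adj a b) (hbd : G.Adj b d) (hdx : G.Adj d x) (hxb : x ≠ b)
    (had : a ≠ d) (ha : ∀ w, G.Adj a w → w = x ∨ w = b) (hb : ∀ w, G.Adj b w → w = a ∨ w = d)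
    (hd : ∀ w, G.Adj d w → w = b ∨ w = x) :
    totD G a - totD G x = (m : ℤ) - 4 ∧ totD G b - totD G x = 2 * ((m : ℤ) - 4) ∧
    totD G d - totD G x = (m : ℤ) - 4 := by
  have hS : ∀ s ∈ ({a, b, d} : Set V), ∀ w, G.Adj s w → w ∈ ({a, b, d} : Set V) ∨ w = x := by
    rintro s (rfl | rfl | rfl) w hw
    · rcases ha w hw with h | h
      · right; exact h
      · left; right; left; exact h
    · rcases hb w hw with h | h
      · left; left; exact h
      · left; right; right; exact h
    · rcases hd w hw with h | h
      · left; right; left; exact h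
      · right; exact h
  have n1 := hxa.ne
  have n2 := hab.ne
  have n3 := hbd.ne
  have n4 := hdx.ne
  let D : Finset (Sym2 V) := {s(x, a), s(a, b), s(b, d), s(d, x)}
  have hcard : D.card = 4 := by
    have e1 : s(x, a) ∉ ({s(a, b), s(b, d), s(d, x)} : Finset (Sym2 V)) := by
      simp; grind
    have e2 : s(a, b) ∉ ({s(b, d), s(d, x)} : Finset (Sym2 V)) := by
      simp; grind
    have e3 : s(b, d) ≠ s(d, x) := by
      simp; grind
    simp only [D]
    rw [Finset.card_insert_of_notMem e1, Finset.card_insert_of_notMem e2, Finset.card_pair e3]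
  have hsum : ∀ u, ∑ f ∈ D, ((eDist G f u : ℤ)) = eDist G s(x, a) u + eDist G s(a, b) u
      + eDist G s(b, d) u + eDist G s(d, x) u := by
    have e1 : s(x, a) ∉ ({s(a, b), s(b, d), s(d, x)} : Finset (Sym2 V)) := by
      simp; grind
    have e2 : s(a, b) ∉ ({s(b, d), s(d, x)} : Finset (Sym2 V)) := by
      simp; grind
    have e3 : s(b, d) ≠ s(d, x) := by
      simp; grind
    intro u
    simp only [D]
    rw [Finset.sum_insert e1, Finset.sum_insert e2, Finset.sum_pair e3]
    ring
  have hDE : D ⊆ G.edgeFinset := by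
    intro e he
    simp [D] at he
    rcases he with rfl | rfl | rfl | rfl <;> simpa
  have hmemD : ∀ u v, G.Adj u v → s(u, v) ∉ D → u ∉ ({a, b, d} : Set V) := by
    rintro u v huv hn (rfl | rfl | rfl)
    · rcases ha v huv with rfl | rfl
      · apply hn; simp [D]
      · apply hn; simp [D]
    · rcases hb v huv with rfl | rfl
      · apply hn; simp [D]
      · apply hn; simp [D]
    · rcases hd v huv with rfl | rfl
      · apply hn; simp [D]
      · apply hn; simp [D]
  have hf : ∀ f ∈ G.edgeFinset \ D, ∀ w ∈ f, w ∉ ({a, b, d} : Set V) := by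
    intro f hf
    have hf' := Finset.mem_sdiff.1 hf
    induction f with
    | _ p q =>
      have h1 : G.Adj p q := by simpa using hf'.1
      intro w hw
      rcases Sym2.mem_iff.1 hw with rfl | rfl
      · exact hmemD _ _ h1 hf'.2
      · exact hmemD _ _ h1.symm (by rw [Sym2.eq_swap]; exact hf'.2)
  have dxa : G.dist x a = 1 := SimpleGraph.dist_eq_one_iff_adj.2 hxa
  have dab : G.dist a b = 1 := SimpleGraph.dist_eq_one_iff_adj.2 hab
  have dbd : G.dist b d = 1 := SimpleGraph.dist_eq_one_iff_adj.2 hbd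
  have ddx : G.dist d x = 1 := SimpleGraph.dist_eq_one_iff_adj.2 hdx
  have dxb : G.dist x b = 2 := by
    have h1 : G.dist x b ≤ G.dist x a + G.dist a b := hc.dist_triangle
    have h2 : G.dist x b ≠ 0 := by
      intro h; rw [hc.dist_eq_zero_iff] at h; exact hxb h
    have h3 : G.dist x b ≠ 1 := by
      intro h; rw [SimpleGraph.dist_eq_one_iff_adj] at h
      rcases hb x h.symm with h | h
      · exact n1 h
      · exact n4 h.symm
    omega
  have dad : G.dist a d = 2 := by
    have h1 : G.dist a d ≤ G.dist a b + G.dist b d := hc.dist_triangle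
    have h2 : G.dist a d ≠ 0 := by
      intro h; rw [hc.dist_eq_zero_iff] at h; exact had h
    have h3 : G.dist a d ≠ 1 := by
      intro h; rw [SimpleGraph.dist_eq_one_iff_adj] at h
      rcases ha d h with h | h
      · exact n4 h
      · exact n3 h.symm
    omega
  have rax : G.dist a x = 1 := by rw [SimpleGraph.dist_comm]; exact dxa
  have rba : G.dist b a = 1 := by rw [SimpleGraph.dist_comm]; exact dab
  have rdb : G.dist d b = 1 := by rw [SimpleGraph.dist_comm]; exact dbd
  have rxd : G.dist x d = 1 := by rw [SimpleGraph.dist_comm]; exact ddx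
  have rbx : G.dist b x = 2 := by rw [SimpleGraph.dist_comm]; exact dxb
  have rda : G.dist d a = 2 := by rw [SimpleGraph.dist_comm]; exact dad
  have sx : ∑ f ∈ D, ((eDist G f x : ℤ)) = 2 := by
    rw [hsum]; simp [*]
  have sa : ∑ f ∈ D, ((eDist G f a : ℤ)) = 2 := by
    rw [hsum]; simp [*]
  have sb : ∑ f ∈ D, ((eDist G f b : ℤ)) = 2 := by
    rw [hsum]; simp [*]
  have sd : ∑ f ∈ D, ((eDist G f d : ℤ)) = 2 := by
    rw [hsum]; simp [*]
  refine ⟨?_, ?_, ?_⟩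
  · rw [diff_split (D := D) (d := 1) hDE hm (fun f h => by
      rw [sep_eDist hc hS (hf f h) (by simp), dxa]), Finset.sum_sub_distrib, sx, sa, hcard]
    push_cast; ring
  · rw [diff_split (D := D) (d := 2) hDE hm (fun f h => by
      rw [sep_eDist hc hS (hf f h) (by simp), dxb]), Finset.sum_sub_distrib, sx, sb, hcard]
    push_cast; ring
  · rw [diff_split (D := D) (d := 1) hDE hm (fun f h => by
      rw [sep_eDist hc hS (hf f h) (by simp), rxd]), Finset.sum_sub_distrib, sx, sd, hcard]
    push_cast; ring

end partH

section partI
variable {V : Type*} [Fintype V] {G : SimpleGraph V}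

lemma gsRel_asymm {k l : ℕ} (a b) : gsRel k l a b → ¬ gsRel k l b a := by
  rcases a with _ | ⟨i, a⟩ | j | a <;> rcases b with _ | ⟨i', a'⟩ | j' | a' <;>
    simp only [gsRel, false_imp_iff, not_false_eq_true, imp_true_iff]
  · rintro ⟨rfl, h⟩ ⟨_, h'⟩; omega
  · rintro ⟨_, h⟩ ⟨h', _⟩; omega

lemma F2 (hc : G.Connected) {k l m : ℕ} (hm : G.edgeFinset.card = m) (hml : m = 4 * k + l + 2)
    (φ : (Unit ⊕ ((Σ _ : Fin k, Fin 3) ⊕ (Fin l ⊕ Fin 2))) ≃ V)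
    (hφ : ∀ a b, G.Adj (φ a) (φ b) ↔ gsRel k l a b ∨ gsRel k l b a) :
    szRevE G = (2 * (m : ℚ) ^ 2 - m) / 4 + k * (6 * (m : ℚ) - 15) + m - 2 := by
  have nb : ∀ a w, G.Adj (φ a) w → ∃ b, w = φ b ∧ (gsRel k l a b ∨ gsRel k l b a) := by
    intro a w h
    obtain ⟨b, rfl⟩ := φ.surjective w
    exact ⟨b, rfl, (hφ _ _).1 h⟩
  have g1 : ∀ j, gw G m s(φ (Sum.inl ()), φ (Sum.inr (Sum.inr (Sum.inl j)))) = (2 * m - 1) / 4 := by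
    intro j
    have := leaf_diff hc hm (u := φ (Sum.inr (Sum.inr (Sum.inl j)))) (v := φ (Sum.inl ()))
      ((hφ _ _).2 (by simp [gsRel])) (by
        intro w hw
        obtain ⟨b, rfl, hb⟩ := nb _ _ hw
        rcases b with _ | ⟨i, a⟩ | j | b <;> simp [gsRel] at hb ⊢)
    rw [Sym2.eq_swap, gw_mk, this]
    push_cast; ring
  have hz : ∀ w, G.Adj (φ (Sum.inr (Sum.inr (Sum.inr 1)))) w →
      w = φ (Sum.inr (Sum.inr (Sum.inr 0))) := by
    intro w hw
    obtain ⟨b, rfl, hb⟩ := nb _ _ hw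
    rcases b with _ | ⟨i, a⟩ | j | b <;> simp [gsRel] at hb ⊢
    exact hb
  have hy : ∀ w, G.Adj (φ (Sum.inr (Sum.inr (Sum.inr 0)))) w →
      w = φ (Sum.inl ()) ∨ w = φ (Sum.inr (Sum.inr (Sum.inr 1))) := by
    intro w hw
    obtain ⟨b, rfl, hb⟩ := nb _ _ hw
    rcases b with _ | ⟨i, a⟩ | j | b <;> simp [gsRel] at hb ⊢
    omega
  have ayz : G.Adj (φ (Sum.inr (Sum.inr (Sum.inr 0)))) (φ (Sum.inr (Sum.inr (Sum.inr 1)))) :=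
    (hφ _ _).2 (by simp [gsRel])
  have g2 : gw G m s(φ (Sum.inr (Sum.inr (Sum.inr 0))), φ (Sum.inr (Sum.inr (Sum.inr 1)))) =
      (2 * m - 1) / 4 := by
    have := leaf_diff hc hm ayz.symm hz
    rw [Sym2.eq_swap, gw_mk, this]
    push_cast; ring
  have g3 : gw G m s(φ (Sum.inl ()), φ (Sum.inr (Sum.inr (Sum.inr 0)))) =
      (m ^ 2 - (m - 3) ^ 2) / 4 := by
    have := path_diff hc hm (x := φ (Sum.inl ())) ((hφ _ _).2 (by simp [gsRel])) ayz
      (by simp) hy hz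
    rw [Sym2.eq_swap, gw_mk, this]
    push_cast; ring
  have Q : ∀ i : Fin k, _ := fun i => quad_diff hc hm (x := φ (Sum.inl ()))
    (a := φ (Sum.inr (Sum.inl ⟨i, 0⟩))) (b := φ (Sum.inr (Sum.inl ⟨i, 1⟩)))
    (d := φ (Sum.inr (Sum.inl ⟨i, 2⟩)))
    ((hφ _ _).2 (by simp [gsRel])) ((hφ _ _).2 (by simp [gsRel])) ((hφ _ _).2 (by simp [gsRel]))
    ((hφ _ _).2 (by simp [gsRel])) (by simp) (by simp)
    (by
      intro w hw
      obtain ⟨b, rfl, hb⟩ := nb _ _ hw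
      rcases b with _ | ⟨i', a⟩ | j | b <;> simp [gsRel] at hb ⊢
      obtain ⟨rfl, h⟩ := hb
      refine ⟨rfl, ?_⟩
      omega)
    (by
      intro w hw
      obtain ⟨b, rfl, hb⟩ := nb _ _ hw
      rcases b with _ | ⟨i', a⟩ | j | b <;> simp [gsRel] at hb ⊢
      rcases hb with ⟨rfl, h⟩ | ⟨rfl, h⟩
      · right
        refine ⟨rfl, ?_⟩
        omega
      · left
        refine ⟨rfl, ?_⟩
        omega)
    (by
      intro w hw
      obtain ⟨b, rfl, hb⟩ := nb _ _ hw
      rcases b with _ | ⟨i', a⟩ | j | b <;> simp [gsRel] at hb ⊢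
      rcases hb with ⟨rfl, h⟩ | ⟨rfl, h⟩
      · omega
      · refine ⟨rfl, ?_⟩
        omega)
  have g4 : ∀ i : Fin k, gw G m s(φ (Sum.inl ()), φ (Sum.inr (Sum.inl ⟨i, 0⟩))) =
      (m ^ 2 - (m - 4) ^ 2) / 4 := by
    intro i
    rw [Sym2.eq_swap, gw_mk, (Q i).1]
    push_cast; ring
  have g5 : ∀ i : Fin k, gw G m s(φ (Sum.inl ()), φ (Sum.inr (Sum.inl ⟨i, 2⟩))) =
      (m ^ 2 - (m - 4) ^ 2) / 4 := by
    intro i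
    rw [Sym2.eq_swap, gw_mk, (Q i).2.2]
    push_cast; ring
  have g6 : ∀ i : Fin k, gw G m s(φ (Sum.inr (Sum.inl ⟨i, 0⟩)), φ (Sum.inr (Sum.inl ⟨i, 1⟩))) =
      (m ^ 2 - (m - 4) ^ 2) / 4 := by
    intro i
    obtain ⟨h1, h2, h3⟩ := Q i
    rw [gw_mk, show totD G (φ (Sum.inr (Sum.inl ⟨i, 0⟩))) - totD G (φ (Sum.inr (Sum.inl ⟨i, 1⟩))) =
      -((m : ℤ) - 4) by linarith]
    push_cast; ring
  have g7 : ∀ i : Fin k, gw G m s(φ (Sum.inr (Sum.inl ⟨i, 1⟩)), φ (Sum.inr (Sum.inl ⟨i, 2⟩))) =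
      (m ^ 2 - (m - 4) ^ 2) / 4 := by
    intro i
    obtain ⟨h1, h2, h3⟩ := Q i
    rw [gw_mk, show totD G (φ (Sum.inr (Sum.inl ⟨i, 1⟩))) - totD G (φ (Sum.inr (Sum.inl ⟨i, 2⟩))) =
      ((m : ℤ) - 4) by linarith]
    push_cast; ring
  have hs : szRevE G = ∑ a, ∑ b, if gsRel k l a b then gw G m s(φ a, φ b) else 0 := by
    rw [szRevE_eq_sum G hc, hm]
    have h1 : (∑ u, ∑ v, if G.Adj u v then gw G m s(u, v) else 0) =
        ∑ a, ∑ b, if G.Adj (φ a) (φ b) then gw G m s(φ a, φ b) else 0 := by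
      rw [← Equiv.sum_comp φ]
      refine Finset.sum_congr rfl fun a _ => ?_
      rw [← Equiv.sum_comp φ]
    have h2 : (∑ a, ∑ b, if G.Adj (φ a) (φ b) then gw G m s(φ a, φ b) else 0) =
        ∑ a, ∑ b, ((if gsRel k l a b then gw G m s(φ a, φ b) else 0) +
          (if gsRel k l b a then gw G m s(φ b, φ a) else 0)) := by
      refine Finset.sum_congr rfl fun a _ => Finset.sum_congr rfl fun b _ => ?_
      rw [show s(φ b, φ a) = s(φ a, φ b) from Sym2.eq_swap]
      by_cases h3 : gsRel k l a b
      · have h4 := gsRel_asymm _ _ h3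
        simp [hφ, h3, h4]
      · simp [hφ, h3]
    rw [h1, h2]
    simp only [Finset.sum_add_distrib]
    rw [Finset.sum_comm (f := fun a b => if gsRel k l b a then gw G m s(φ b, φ a) else 0)]
    ring
  rw [hs]
  have hS : ∀ (i j : Fin k) (P : Prop) (t : ℚ), (if i = j ∧ P then t else 0) =
      if i = j then (if P then t else 0) else 0 := by
    intro i j P t
    rw [ite_and]
  simp only [Fintype.sum_sum_type, Fintype.sum_sigma, Fin.sum_univ_three, Fin.sum_univ_two,
    gsRel, Finset.sum_const_zero, if_true, if_false, Finset.univ_unique, Finset.sum_singleton]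
  simp [g1, g2, g3, g4, g5, g6, g7, hS, Finset.sum_add_distrib]
  rw [hml]
  push_cast
  ring

/-- forward direction, given the structure at `y` -/
lemma fwd (hG : IsCactus G) {n k m : ℕ} (hn : Fintype.card V = n) (hm : G.edgeFinset.card = m)
    {x y z : V} (hxy : G.Adj x y) (hdx : 2 ≤ G.degree x)
    (hxyN : ∀ C, IsCyc G C → s(x, y) ∉ C) (hk : (cycs G).card = k)
    (hcyc : ∀ C, IsCyc G C → ∃ c : ZMod (1 + 3) → V, CycP G C 1 c ∧
      ∀ i, (totD G (c i) - totD G (c (i + 1))) ^ 2 = ((m : ℤ) - 4) ^ 2)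
    (hnc : ∀ u v, G.Adj u v → (∀ C, IsCyc G C → s(u, v) ∉ C) → s(u, v) ≠ s(x, y) →
      (∀ w, G.Adj u w → w = v) ∨ (∀ w, G.Adj v w → w = u))
    (hzx : z ≠ x) (hyz : G.Adj y z) (hy : ∀ w, G.Adj y w → w = x ∨ w = z) :
    Nonempty (G ≃g GStar1 n k) := by
  obtain ⟨h1, h2, h3, h4, h5⟩ := struct1 hG hm hxy hdx hxyN hcyc hnc hzx hyz hy
  exact F1' hG hxy hzx hyz (fun C hC => (hcyc C hC).imp fun c h => h.1) h1 h2 h3 h4 h5 hn hk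

end partI

/-- a cactus with `k` cycles and `m` edges (`m > 15`, `m > 4k`) that has a
cut edge which is not a pendant edge satisfies
`Sz*ₑ(G) ≥ f(4,…,4) + m − 2 = (2m² − m)/4 + k(6m − 15) + m − 2`, with equality iff
`G ≅ G*₁`. -/
theorem stmt17 {V : Type*} [Fintype V] (G : SimpleGraph V) (hG : IsCactus G)
    (n k m : ℕ) (hn : Fintype.card V = n) (hm : G.edgeFinset.card = m)
    (hkm : m = n - 1 + k) (h15 : 15 < m) (h4k : 4 * k < m)
    (x y : V) (hxy : G.Adj x y) (hcut : ¬ (G.deleteEdges {s(x, y)}).Connected)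
    (hdx : 2 ≤ G.degree x) (hdy : 2 ≤ G.degree y) :
    (2 * (m : ℚ) ^ 2 - m) / 4 + k * (6 * (m : ℚ) - 15) + m - 2 ≤ szRevE G ∧
    (szRevE G = (2 * (m : ℚ) ^ 2 - m) / 4 + k * (6 * (m : ℚ) - 15) + m - 2 ↔
      Nonempty (G ≃g GStar1 n k)) := by
  obtain ⟨hle, heq⟩ := main_ineq hG n k m hn hm hkm h15 x y hxy hcut hdx hdy
  refine ⟨hle, fun h => ?_, ?_⟩
  · obtain ⟨hk, hC, hN, hX⟩ := heq h
    have hxyN : ∀ C, IsCyc G C → s(x, y) ∉ C := fun C hC => xy_not_cyc hG.1 hcut hC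
    have hcyc : ∀ C, IsCyc G C → ∃ c : ZMod (1 + 3) → V, CycP G C 1 c ∧
        ∀ i, (totD G (c i) - totD G (c (i + 1))) ^ 2 = ((m : ℤ) - 4) ^ 2 := by
      intro C hCC
      obtain ⟨s, c, h⟩ := exists_cycP hG hCC
      obtain ⟨rfl, h2⟩ := (h.excess hG.1 hm h15).2 (hC C hCC)
      exact ⟨c, h, h2⟩
    have hnc : ∀ u v, G.Adj u v → (∀ C, IsCyc G C → s(u, v) ∉ C) → s(u, v) ≠ s(x, y) →
        (∀ w, G.Adj u w → w = v) ∨ (∀ w, G.Adj v w → w = u) := by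
      intro u v huv h1 h2
      exact gw_eq hG.1 hm huv (hN _ (by simpa using huv) h1 h2)
    have hsw : s(y, x) = s(x, y) := Sym2.eq_swap
    rcases xy_eq hG.1 hm hxy hdx hdy hX with ⟨b, hb, hyb, hy⟩ | ⟨a, ha, hxa, hx⟩
    · exact fwd hG hn hm hxy hdx hxyN hk hcyc hnc hb hyb hy
    · exact fwd hG hn hm hxy.symm hdy (by rw [hsw]; exact hxyN) hk hcyc
        (by rw [hsw]; exact hnc) ha hxa hx
  · rintro ⟨e⟩
    have hcard := Fintype.card_congr e.toEquiv
    simp at hcard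
    refine F2 hG.1 hm (l := n - 3 * k - 3) (by omega) e.symm.toEquiv ?_
    intro a b
    have h1 : G.Adj (e.symm a) (e.symm b) ↔ (GStar1 n k).Adj a b := e.symm.map_rel_iff
    refine h1.trans ?_
    rw [GStar1_adj]
    constructor
    · exact fun h => h.2
    · intro h
      refine ⟨?_, h⟩
      rintro rfl
      exact gsRel_irrefl a (or_self_iff.1 h)
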